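/- arXiv:1308.0579 — 5 statements merged into one kernel-verified Lean document; each statement's English description precedes it below -/
import Mathlib

section
/- For every integer n > 1, the polynomial q(X) = (1 + Xⁿ + X^{2n})(1 + X⁴) + 2X^{n+2} has a complex root that is not a root of unity; in particular q is not a product of cyclotomic polynomials. -/
/-!
Suppose every root of `q` were a root of unity, hence on the unit circle. There
`q(z) = 0` reads `(1 + 2 Re zⁿ) Re z² = -1` (`circle_eq`), which forces `Re z² ≤ -1/3` unless
`z = -1` (`re_sq_le`). So almost all squares `z²` lie far from the positive real axis, and
`|9/16 - z²|² ≥ 433/256 > 1` for each of them. The root `-1` occurs only for odd `n`, with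
multiplicity at most two (`count_le_two`). Hence `∏ |9/16 - z²|` grows exponentially in the
degree `2n + 4`. But this product is `|q(3/4) q(-3/4)|`, which is bounded in `n`: a contradiction
for all `n ≥ 3`. For `n = 2` the equation on the circle has no solution at all.

Consequently `q` is not a product of cyclotomic polynomials, whose roots are all roots of unity.
-/

open Polynomial

/-- The polynomial `q`, over `ℂ`. -/
noncomputable def qC (n : ℕ) : ℂ[X] :=
  (1 + X ^ n + X ^ (2 * n)) * (1 + X ^ 4) + 2 * X ^ (n + 2)

lemma qC_eval (n : ℕ) (z : ℂ) :
    (qC n).eval z = (1 + z ^ n + z ^ (2 * n)) * (1 + z ^ 4) + 2 * z ^ (n + 2) := by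
  simp [qC]

lemma qC_eq (n : ℕ) : qC n = X ^ (2 * n + 4) +
    (1 + X ^ 4 + X ^ n + C 2 * X ^ (n + 2) + X ^ (n + 4) + X ^ (2 * n)) := by
  simp only [qC, map_ofNat]; ring

lemma qC_lower_degree (n : ℕ) (hn : 1 < n) :
    (1 + X ^ 4 + X ^ n + C 2 * X ^ (n + 2) + X ^ (n + 4) + X ^ (2 * n) : ℂ[X]).degree
      < ((2 * n + 4 : ℕ) : WithBot ℕ) := by
  rw [degree_lt_iff_coeff_zero]
  intro m hm
  have h0 : m ≠ 0 := by omega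
  have h1 : m ≠ 4 := by omega
  have h2 : m ≠ n := by omega
  have h3 : m ≠ n + 2 := by omega
  have h4 : m ≠ n + 4 := by omega
  have h5 : m ≠ 2 * n := by omega
  simp only [coeff_add, coeff_one, coeff_C_mul, coeff_X_pow, h0, h1, h2, h3, h4, h5, if_false]
  simp

lemma qC_monic (n : ℕ) (hn : 1 < n) : (qC n).Monic := by
  rw [qC_eq]; exact monic_X_pow_add (qC_lower_degree n hn)

lemma qC_natDegree (n : ℕ) (hn : 1 < n) : (qC n).natDegree = 2 * n + 4 := by
  rw [qC_eq, add_comm]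
  have h := degree_add_eq_right_of_degree_lt (p := (1 + X ^ 4 + X ^ n + C 2 * X ^ (n + 2)
    + X ^ (n + 4) + X ^ (2 * n) : ℂ[X])) (q := X ^ (2 * n + 4))
    (by rw [degree_X_pow]; exact qC_lower_degree n hn)
  rw [degree_X_pow] at h
  exact natDegree_eq_of_degree_eq_some h

/-- On the unit circle, `q(z) / z ^ (n + 2) = 2 ((1 + 2 Re zⁿ) Re z² + 1)`. -/
lemma circle_eq (n : ℕ) (z : ℂ) (hz : ‖z‖ = 1) (h : (qC n).eval z = 0) :
    (1 + 2 * (z ^ n).re) * (z ^ 2).re = -1 := by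
  have key : ∀ w : ℂ, ‖w‖ = 1 → 1 + w ^ 2 = w * ((2 * w.re : ℝ) : ℂ) := by
    intro w hw
    have h1 : w * (starRingEnd ℂ) w = 1 := by
      rw [Complex.mul_conj, Complex.normSq_eq_norm_sq, hw]; simp
    rw [← Complex.add_conj, mul_add, h1]; ring
  have e1 := key (z ^ n) (by rw [norm_pow, hz, one_pow])
  have e2 := key (z ^ 2) (by rw [norm_pow, hz, one_pow])
  rw [qC_eval] at h
  have hz0 : z ≠ 0 := by rintro rfl; simp at hz
  have h2 : z ^ (n + 2) * (2 * ((((1 + 2 * (z ^ n).re) * (z ^ 2).re + 1 : ℝ)) : ℂ)) = 0 := by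
    rw [← h]
    have : (1 + z ^ n + z ^ (2 * n)) * (1 + z ^ 4)
        = ((1 + (z ^ n) ^ 2) + z ^ n) * (1 + (z ^ 2) ^ 2) := by ring
    rw [this, e1, e2]
    push_cast
    ring
  rcases mul_eq_zero.1 h2 with h3 | h3
  · exact absurd h3 (pow_ne_zero _ hz0)
  · rcases mul_eq_zero.1 h3 with h4 | h4
    · norm_num at h4
    · have := Complex.ofReal_eq_zero.1 h4
      linarith

/-- The unimodular roots other than `-1` lie on the two arcs `Re z² ≤ -1/3`. -/
lemma re_sq_le (n : ℕ) (z : ℂ) (hz : ‖z‖ = 1) (h : (qC n).eval z = 0) (h1 : z ≠ -1) :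
    (z ^ 2).re ≤ -1 / 3 := by
  have e := circle_eq n z hz h
  have hw : ‖z ^ n‖ = 1 := by rw [norm_pow, hz, one_pow]
  have hv : ‖z ^ 2‖ = 1 := by rw [norm_pow, hz, one_pow]
  have c := abs_le.1 ((Complex.abs_re_le_norm (z ^ n)).trans_eq hw)
  have d := abs_le.1 ((Complex.abs_re_le_norm (z ^ 2)).trans_eq hv)
  by_contra hlt
  push Not at hlt
  -- `1 + 2 Re zⁿ ∈ [-1, 3]`, so a negative `Re z²` is at most `-1/3` and a nonnegative one is `1`.
  have hd : (z ^ 2).re = 1 := by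
    rcases lt_or_ge (z ^ 2).re 0 with h0 | h0 <;> nlinarith
  have h2 : z ^ 2 = 1 := by
    have := Complex.sq_norm_sub_sq_re (z ^ 2)
    rw [hv, hd] at this
    apply Complex.ext
    · simpa using hd
    · simp only [Complex.one_im]; nlinarith
  rcases sq_eq_sq_iff_eq_or_eq_neg.1 (h2.trans (one_pow 2).symm) with h3 | h3
  · rw [h3, qC_eval] at h; norm_num at h
  · exact h1 h3

/-- For odd `n`, `-1` is at most a double root of `q`, because `q''(-1) = 4n² + 8 ≠ 0`. -/
lemma count_le_two (n : ℕ) (hn : 1 < n) (ho : Odd n) : (qC n).roots.count (-1) ≤ 2 := by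
  rw [count_roots]
  by_contra hlt
  push Not at hlt
  have hd : (X - C (-1)) ^ 3 ∣ qC n :=
    (pow_dvd_pow _ hlt).trans (pow_rootMultiplicity_dvd _ _)
  obtain ⟨g, hg⟩ := hd
  have h0 : (derivative (derivative (qC n))).eval (-1) = 0 := by
    rw [hg]
    simp [derivative_mul, derivative_pow]
  obtain ⟨k, rfl⟩ := ho
  obtain ⟨j, rfl⟩ : ∃ j, k = j + 1 := ⟨k - 1, by omega⟩
  -- Odd `n ≥ 3` is `2j + 3`; all exponents below are arranged as `m + 2` with visible parity.
  have hD : ∀ m : ℕ, (derivative (derivative (X ^ (m + 2) : ℂ[X]))).eval (-1)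
      = (m + 2) * (m + 1) * (-1) ^ m := by
    intro m
    simp [derivative_mul]
    ring
  have hp : ∀ m : ℕ, (-1 : ℂ) ^ (2 * m) = 1 := fun m => by rw [pow_mul]; norm_num
  have hX : qC (2 * (j + 1) + 1) = C 1 + X ^ (2 * 1 + 2) + X ^ (2 * j + 1 + 2)
      + C 2 * X ^ (2 * (j + 1) + 1 + 2) + X ^ (2 * (j + 2) + 1 + 2)
      + X ^ (2 * (2 * j + 2) + 2) + X ^ (2 * (2 * j + 4) + 2) := by
    rw [qC_eq, C_1]; ring
  rw [hX] at h0
  simp only [derivative_add, derivative_C, derivative_C_mul, eval_add, eval_C_mul, hD,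
    derivative_zero, eval_zero] at h0
  simp only [pow_succ _ (2 * _), hp] at h0
  -- `44 + 48j + 16j² = 4n² + 8`
  have h1 : ((44 + 48 * j + 16 * j ^ 2 : ℕ) : ℂ) = 0 := by
    push_cast at h0 ⊢
    linear_combination h0
  have := Nat.cast_eq_zero.1 h1
  omega

/-- A product over `S` whose factors are at least `K`, except at `-1` where `ρ * K` is assumed,
is at least `K ^ card S`, up to one `ρ` for each occurrence of `-1`. -/
lemma prod_lower (K ρ : ℝ) (hK : 0 < K) (hρ : 0 < ρ) (f : ℂ → ℝ) (S : Multiset ℂ)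
    (hf : ∀ z ∈ S, z ≠ -1 → K ≤ f z) (hf1 : ρ * K ≤ f (-1)) :
    ρ ^ (S.count (-1)) * K ^ S.card ≤ (S.map f).prod := by
  induction S using Multiset.induction_on with
  | empty => simp
  | cons a S ih =>
    have ih := ih fun z hz => hf z (Multiset.mem_cons_of_mem hz)
    rw [Multiset.map_cons, Multiset.prod_cons, Multiset.card_cons, pow_succ]
    have hp : 0 < ρ ^ (S.count (-1)) * K ^ S.card := by positivity
    by_cases ha : a = -1
    · subst ha
      rw [Multiset.count_cons_self, pow_succ]
      calc _ = (ρ * K) * (ρ ^ (S.count (-1)) * K ^ S.card) := by ring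
        _ ≤ _ := mul_le_mul hf1 ih hp.le (le_trans (by positivity) hf1)
    · rw [Multiset.count_cons_of_ne (Ne.symm ha)]
      have h := hf a (Multiset.mem_cons_self a S) ha
      calc _ = K * (ρ ^ (S.count (-1)) * K ^ S.card) := by ring
        _ ≤ _ := mul_le_mul h ih hp.le (hK.le.trans h)

/-- `∏ |9/16 - z²|² = |q(3/4) q(-3/4)|²`, the product being over the roots `z` of `q`. -/
lemma prod_eq (n : ℕ) (hn : 1 < n) :
    ((qC n).roots.map fun z => ‖(9 / 16 : ℂ) - z ^ 2‖ ^ 2).prod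
      = ‖(qC n).eval (3 / 4) * (qC n).eval (-3 / 4)‖ ^ 2 := by
  have hev : ∀ x : ℂ, (qC n).eval x = ((qC n).roots.map fun z => x - z).prod := fun x =>
    (IsAlgClosed.splits (qC n)).eval_eq_prod_roots_of_monic (qC_monic n hn) x
  have hnorm : ∀ x : ℂ, ‖(qC n).eval x‖ = ((qC n).roots.map fun z => ‖x - z‖).prod := by
    intro x
    rw [hev x]
    have := map_multiset_prod (normHom : ℂ →*₀ ℝ) ((qC n).roots.map fun z => x - z)
    rw [Multiset.map_map] at this
    exact this
  rw [norm_mul, hnorm, hnorm, ← Multiset.prod_map_mul, ← Multiset.prod_map_pow]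
  congr 1
  apply Multiset.map_congr rfl
  intro z _
  rw [← norm_mul, ← norm_neg]
  congr 2
  ring

lemma norm_sq_lower (z : ℂ) (hz : ‖z‖ = 1) (h : (z ^ 2).re ≤ -1 / 3) :
    (433 / 256 : ℝ) ≤ ‖(9 / 16 : ℂ) - z ^ 2‖ ^ 2 := by
  have hv : ‖z ^ 2‖ ^ 2 = 1 := by rw [norm_pow, hz]; norm_num
  rw [← Complex.normSq_eq_norm_sq, Complex.normSq_apply] at hv ⊢
  have e1 : ((9 / 16 : ℂ) - z ^ 2).re = 9 / 16 - (z ^ 2).re := by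
    simp only [Complex.sub_re]; norm_num
  have e2 : ((9 / 16 : ℂ) - z ^ 2).im = - (z ^ 2).im := by
    simp only [Complex.sub_im]; norm_num
  rw [e1, e2]
  nlinarith

/-- If all roots are unimodular, `|q(3/4) q(-3/4)|²` is exponentially large, up to a factor
`49/433` for each occurrence of the root `-1`. -/
lemma roots_lower (n : ℕ) (hn : 1 < n) (hall : ∀ z : ℂ, (qC n).eval z = 0 → ‖z‖ = 1) :
    ((49 / 433 : ℝ)) ^ ((qC n).roots.count (-1)) * (433 / 256) ^ (2 * n + 4) ≤
      ‖(qC n).eval (3 / 4) * (qC n).eval (-3 / 4)‖ ^ 2 := by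
  have hcard : (qC n).roots.card = 2 * n + 4 := by
    rw [← qC_natDegree n hn]; exact (IsAlgClosed.splits (qC n)).natDegree_eq_card_roots.symm
  rw [← prod_eq n hn, ← hcard]
  -- At `-1` the factor is `(1 - 9/16)² = 49/256 = (49/433) * (433/256)`.
  apply prod_lower _ _ (by norm_num) (by norm_num)
  · intro z hz h1
    have hr : (qC n).eval z = 0 := (mem_roots'.1 hz).2
    exact norm_sq_lower z (hall z hr) (re_sq_le n z (hall z hr) hr h1)
  · norm_num

/-- The case of even `n > 2`: `-1` is not a root, and `|q(3/4) q(-3/4)| = q(3/4)²` is too small. -/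
lemma even_case (n : ℕ) (hn : 3 < n) (he : Even n)
    (hall : ∀ z : ℂ, (qC n).eval z = 0 → ‖z‖ = 1) : False := by
  have h1 : (qC n).eval (-1) ≠ 0 := by
    rw [qC_eval, he.neg_one_pow, (he.add even_two).neg_one_pow, (even_two_mul n).neg_one_pow]
    norm_num
  have hb := roots_lower n (by omega) hall
  rw [Multiset.count_eq_zero_of_notMem fun h => h1 (mem_roots'.1 h).2, pow_zero, one_mul] at hb
  have hv : (qC n).eval (3 / 4) * (qC n).eval (-3 / 4) = ((((1 + (3 / 4) ^ n
      + ((3 / 4) ^ n) ^ 2) * (337 / 256) + (3 / 4) ^ n * (9 / 8)) ^ 2 : ℝ) : ℂ) := by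
    have : (-3 / 4 : ℂ) ^ n = (3 / 4) ^ n := by rw [neg_div, he.neg_pow]
    rw [qC_eval, qC_eval, pow_mul', pow_mul', pow_add, pow_add, this]
    push_cast
    ring
  rw [hv, Complex.norm_real, Real.norm_eq_abs, sq_abs] at hb
  have ha : ((3 : ℝ) / 4) ^ n ≤ (3 / 4) ^ 4 :=
    pow_le_pow_of_le_one (by norm_num) (by norm_num) (by omega)
  have ha0 : 0 < ((3 : ℝ) / 4) ^ n := by positivity
  have hK : ((433 : ℝ) / 256) ^ 12 ≤ (433 / 256) ^ (2 * n + 4) :=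
    pow_le_pow_right₀ (by norm_num) (by omega)
  generalize ((3 : ℝ) / 4) ^ n = a at *
  have : ((1 + a + a ^ 2) * (337 / 256) + a * (9 / 8)) ^ 2 ≤
      ((1 + (3 / 4) ^ 4 + ((3 / 4) ^ 4) ^ 2) * (337 / 256) + (3 / 4) ^ 4 * (9 / 8)) ^ 2 := by
    gcongr
  have h3 := pow_le_pow_left₀ (by positivity) this 2
  have h4 := (hK.trans hb).trans h3
  norm_num at h4

/-- The case of odd `n`: the double root `-1` costs only a constant factor. -/
lemma odd_case (n : ℕ) (hn : 1 < n) (ho : Odd n)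
    (hall : ∀ z : ℂ, (qC n).eval z = 0 → ‖z‖ = 1) : False := by
  have hb := roots_lower n (by omega) hall
  have hv : (qC n).eval (3 / 4) * (qC n).eval (-3 / 4) = (((1 + (9 / 16) ^ n) ^ 2 *
      (337 / 256) ^ 2 - (9 / 16) ^ n * (625 / 256) ^ 2 : ℝ) : ℂ) := by
    have h1 : (-3 / 4 : ℂ) ^ n = - (3 / 4) ^ n := by rw [neg_div, ho.neg_pow]
    have h2 : (9 / 16 : ℂ) ^ n = ((3 / 4) ^ n) ^ 2 := by rw [← pow_mul', pow_mul]; norm_num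
    rw [qC_eval, qC_eval, pow_mul', pow_mul', pow_add, pow_add, h1]
    push_cast
    rw [h2]
    ring
  rw [hv, Complex.norm_real, Real.norm_eq_abs, sq_abs] at hb
  have hc : ((49 : ℝ) / 433) ^ 2 ≤ (49 / 433) ^ ((qC n).roots.count (-1)) :=
    pow_le_pow_of_le_one (by norm_num) (by norm_num) (count_le_two n hn ho)
  have hb' := (mul_le_mul_of_nonneg_right hc (by positivity)).trans hb
  -- The bound is tight enough at `n = 3` to require exact values; from `n = 5` on, `2` suffices.
  rcases (show n = 3 ∨ 5 ≤ n by rcases ho with ⟨k, rfl⟩; omega) with rfl | h5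
  · norm_num at hb'
  have hK : ((433 : ℝ) / 256) ^ 14 ≤ (433 / 256) ^ (2 * n + 4) :=
    pow_le_pow_right₀ (by norm_num) (by omega)
  have ha : ((9 : ℝ) / 16) ^ n ≤ (9 / 16) ^ 5 :=
    pow_le_pow_of_le_one (by norm_num) (by norm_num) h5
  have ha0 : 0 < ((9 : ℝ) / 16) ^ n := by positivity
  generalize ((9 : ℝ) / 16) ^ n = a at *
  have hq : |(1 + a) ^ 2 * (337 / 256) ^ 2 - a * (625 / 256) ^ 2| ≤ 2 := by
    norm_num at ha
    rw [abs_le]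
    constructor <;> nlinarith
  have h3 := sq_le_sq' (abs_le.1 hq).1 (abs_le.1 hq).2
  have h4 := (mul_le_mul_of_nonneg_left hK (by positivity)).trans (hb'.trans h3)
  norm_num at h4

/-- For `n = 2` there is no root on the unit circle: `(1 + 2c)c = -1` has no real solution. -/
lemma two_case (hall : ∀ z : ℂ, (qC 2).eval z = 0 → ‖z‖ = 1) : False := by
  obtain ⟨z, hz⟩ := IsAlgClosed.exists_root (qC 2) (by
    rw [degree_eq_natDegree (qC_monic 2 (by norm_num)).ne_zero, qC_natDegree 2 (by norm_num)]
    norm_num)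
  have := circle_eq 2 z (hall z hz) hz
  nlinarith [sq_nonneg ((z ^ 2).re + 1 / 4)]

/-- Lemma 8.6(1): for `n > 1`, `q(X) = (1 + Xⁿ + X^{2n})(1 + X⁴) + 2X^{n+2}`
has a complex root that is not a root of unity; in particular `q` is not a
product of cyclotomic polynomials. -/
theorem not_cyclotomic_product_one
    (n : ℕ) (hn : 1 < n) :
    (∃ z : ℂ, (1 + z ^ n + z ^ (2 * n)) * (1 + z ^ 4) + 2 * z ^ (n + 2) = 0 ∧
      ∀ m : ℕ, 0 < m → z ^ m ≠ 1) ∧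
    ¬ ∃ s : Multiset ℕ, (∀ m ∈ s, 0 < m) ∧
      ((1 + X ^ n + X ^ (2 * n)) * (1 + X ^ 4) + 2 * X ^ (n + 2) : Polynomial ℤ) =
        (s.map (fun m => cyclotomic m ℤ)).prod := by
  have hex : ∃ z : ℂ, (1 + z ^ n + z ^ (2 * n)) * (1 + z ^ 4) + 2 * z ^ (n + 2) = 0 ∧
      ∀ m : ℕ, 0 < m → z ^ m ≠ 1 := by
    by_contra hno
    push Not at hno
    have hall : ∀ z : ℂ, (qC n).eval z = 0 → ‖z‖ = 1 := by
      intro z hz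
      rw [qC_eval] at hz
      obtain ⟨m, hm, h⟩ := hno z hz
      exact Complex.norm_eq_one_of_pow_eq_one h hm.ne'
    rcases Nat.even_or_odd n with he | ho
    · rcases (show n = 2 ∨ 3 < n by rcases he with ⟨k, rfl⟩; omega) with rfl | h3
      · exact two_case hall
      · exact even_case n h3 he hall
    · exact odd_case n hn ho hall
  refine ⟨hex, ?_⟩
  rintro ⟨s, hs, hprod⟩
  obtain ⟨z, hz, hz1⟩ := hex
  have h := congrArg (aeval z) hprod
  rw [map_multiset_prod, Multiset.map_map] at h
  simp only [map_add, map_mul, map_pow, map_one, aeval_X, map_ofNat] at h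
  rw [hz] at h
  obtain ⟨m, hm, h0⟩ := Multiset.mem_map.1 (Multiset.prod_eq_zero_iff.1 h.symm)
  have hm0 := hs m hm
  have : NeZero (m : ℂ) := ⟨Nat.cast_ne_zero.2 hm0.ne'⟩
  have hr : (cyclotomic m ℂ).IsRoot z := by
    rw [IsRoot, ← map_cyclotomic_int, eval_map]
    exact h0
  exact hz1 m hm0 (isRoot_cyclotomic_iff.1 hr).pow_eq_one
end

section
/- Let R be an associative unital ring and x, y ∈ R elements satisfying yx = xy + x². Then, setting X = x², Y = y², Z = xy, the following identities hold in R: ZX = XZ + 2X², YX = XY + 4XZ + 6X², YZ = (Z + 2X)Y + 2XZ, and Z² = XY + XZ. -/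
/-!
The relation `yx = xy + x²` makes `[y, -]` a derivation with `x ↦ x²`, so that
`y xⁿ = xⁿ y + n xⁿ⁺¹`. Applying this for `n = 1, 2, 3` writes both sides of each identity as
combinations of ordered monomials `xⁱ yʲ`, and these combinations agree.
-/

/-- Relations (E2.0.1)–(E2.0.4) in the Jordan plane: if `yx = xy + x²`, then
with `X = x²`, `Y = y²`, `Z = xy` one has `ZX = XZ + 2X²`,
`YX = XY + 4XZ + 6X²`, `YZ = (Z + 2X)Y + 2XZ`, and `Z² = XY + XZ`. -/
theorem jordan_plane_veronese_relations
    {R : Type*} [Ring R] (x y : R) (h : y * x = x * y + x ^ 2)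
    (X Y Z : R) (hX : X = x ^ 2) (hY : Y = y ^ 2) (hZ : Z = x * y) :
    Z * X = X * Z + 2 * X ^ 2 ∧
    Y * X = X * Y + 4 * (X * Z) + 6 * X ^ 2 ∧
    Y * Z = (Z + 2 * X) * Y + 2 * (X * Z) ∧
    Z ^ 2 = X * Y + X * Z := by
  subst hX hY hZ
  have h2 : y * x ^ 2 = x ^ 2 * y + 2 * x ^ 3 := by
    calc y * x ^ 2 = (y * x) * x := by noncomm_ring
      _ = (x * y + x ^ 2) * x := by rw [h]
      _ = x * (y * x) + x ^ 3 := by noncomm_ring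
      _ = x ^ 2 * y + 2 * x ^ 3 := by rw [h]; noncomm_ring
  have h3 : y * x ^ 3 = x ^ 3 * y + 3 * x ^ 4 := by
    calc y * x ^ 3 = (y * x ^ 2) * x := by noncomm_ring
      _ = x ^ 2 * (y * x) + 2 * x ^ 4 := by rw [h2]; noncomm_ring
      _ = x ^ 3 * y + 3 * x ^ 4 := by rw [h]; noncomm_ring
  refine ⟨?_, ?_, ?_, ?_⟩
  · calc x * y * x ^ 2 = x * (y * x ^ 2) := by noncomm_ring
      _ = x ^ 2 * (x * y) + 2 * (x ^ 2) ^ 2 := by rw [h2]; noncomm_ring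
  · calc y ^ 2 * x ^ 2 = y * (y * x ^ 2) := by noncomm_ring
      _ = y * (x ^ 2 * y + 2 * x ^ 3) := by rw [h2]
      _ = (y * x ^ 2) * y + 2 * (y * x ^ 3) := by noncomm_ring
      _ = x ^ 2 * y ^ 2 + 4 * (x ^ 2 * (x * y)) + 6 * (x ^ 2) ^ 2 := by
        rw [h2, h3]; noncomm_ring
  · calc y ^ 2 * (x * y) = y * (y * x) * y := by noncomm_ring
      _ = y * (x * y + x ^ 2) * y := by rw [h]
      _ = (y * x) * y * y + (y * x ^ 2) * y := by noncomm_ring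
      _ = (x * y + 2 * x ^ 2) * y ^ 2 + 2 * (x ^ 2 * (x * y)) := by
        rw [h, h2]; noncomm_ring
  · calc (x * y) ^ 2 = x * (y * x) * y := by noncomm_ring
      _ = x ^ 2 * y ^ 2 + x ^ 2 * (x * y) := by rw [h]; noncomm_ring
end

section
/- Let n ≥ 1 be an integer, ε ∈ ℂ a primitive 2n-th root of unity, and t ∈ ℂ with t^{2n} ≠ 1. Then ∑_{i=0}^{2n−1} 1/((1 − εⁱt)(1 − ε^{−i}t)) = 2n(1 − t^{4n}) / ((1 − t^{2n})²(1 − t²)). -/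
/-!
Write `N = 2n`. For `ω = εⁱ` the partial fraction identity
`(1 - t²) / ((1 - ωt)(1 - ω⁻¹t)) = 1/(1 - ωt) + 1/(1 - ω⁻¹t) - 1`
reduces the sum to `∑ᵢ 1/(1 - ηⁱt) = N/(1 - t^N)` for the two primitive `N`-th roots of unity
`η = ε` and `η = ε⁻¹` (`sum_one_div_one_sub`). The latter holds since `1/(1 - ηⁱt)` equals
`(∑_{j<N} (ηⁱt)ʲ) / (1 - t^N)`, and orthogonality of characters kills every power of `t` but the
constant one.
Altogether `(1 - t²) S₁ = 2N/(1 - t^N) - N = N(1 + t^N)/(1 - t^N)`.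
-/

theorem one_sub_ne_zero_of_pow {N : ℕ} {ω t : ℂ} (hω : ω ^ N = 1) (ht : t ^ N ≠ 1) :
    1 - ω * t ≠ 0 := by
  intro h
  apply ht
  have h1 : (ω * t) ^ N = 1 := by rw [← sub_eq_zero.mp h, one_pow]
  rwa [mul_pow, hω, one_mul] at h1

/-- The average over the `N`-th roots of unity of the geometric series `1 / (1 - ηⁱ t)`
is `1 / (1 - t ^ N)`. -/
theorem sum_one_div_one_sub {N : ℕ} (hN : 0 < N) {η t : ℂ} (hη : IsPrimitiveRoot η N)
    (ht : t ^ N ≠ 1) :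
    ∑ i ∈ Finset.range N, 1 / (1 - η ^ i * t) = N / (1 - t ^ N) := by
  have hD : 1 - t ^ N ≠ 0 := sub_ne_zero.mpr ht.symm
  have key : ∀ i ∈ Finset.range N, 1 / (1 - η ^ i * t) =
      (∑ j ∈ Finset.range N, (η ^ j) ^ i * t ^ j) / (1 - t ^ N) := by
    intro i _
    have hω : (η ^ i) ^ N = 1 := by rw [pow_right_comm, hη.pow_eq_one, one_pow]
    have hg := mul_neg_geom_sum (η ^ i * t) N
    rw [mul_pow, hω, one_mul] at hg
    rw [div_eq_div_iff (one_sub_ne_zero_of_pow hω ht) hD, one_mul, ← hg, mul_comm]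
    congr 1
    exact Finset.sum_congr rfl fun j _ => by rw [mul_pow, pow_right_comm]
  rw [Finset.sum_congr rfl key, ← Finset.sum_div, Finset.sum_comm]
  congr 1
  rw [Finset.sum_eq_single_of_mem 0 (Finset.mem_range.mpr hN)]
  · simp
  · intro j hj hj0
    have hne : η ^ j ≠ 1 := hη.pow_ne_one_of_pos_of_lt hj0 (Finset.mem_range.mp hj)
    rw [← Finset.sum_mul, geom_sum_eq hne, pow_right_comm, hη.pow_eq_one]
    simp

/-- The sum `S₁` in the proof of Example 8.3: for `ε` a primitive `2n`-th root
of unity and `t^{2n} ≠ 1`,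
`∑_{i=0}^{2n-1} 1/((1 - εⁱt)(1 - ε⁻ⁱt)) = 2n(1 - t^{4n})/((1 - t^{2n})²(1 - t²))`. -/
theorem molien_sum_S1
    (n : ℕ) (hn : 1 ≤ n) (ε : ℂ) (hε : IsPrimitiveRoot ε (2 * n))
    (t : ℂ) (ht : t ^ (2 * n) ≠ 1) :
    ∑ i ∈ Finset.range (2 * n),
        1 / ((1 - ε ^ i * t) * (1 - ε ^ (-(i : ℤ)) * t)) =
      2 * n * (1 - t ^ (4 * n)) / ((1 - t ^ (2 * n)) ^ 2 * (1 - t ^ 2)) := by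
  have hN : 0 < 2 * n := by omega
  have hD : 1 - t ^ (2 * n) ≠ 0 := sub_ne_zero.mpr ht.symm
  have h2 : 1 - t ^ 2 ≠ 0 := by
    intro h
    apply ht
    rw [pow_mul, ← sub_eq_zero.mp h, one_pow]
  have hε0 : ε ≠ 0 := hε.ne_zero hN.ne'
  have key : ∀ i ∈ Finset.range (2 * n),
      1 / ((1 - ε ^ i * t) * (1 - ε ^ (-(i : ℤ)) * t)) =
        (1 / (1 - ε ^ i * t) + 1 / (1 - ε⁻¹ ^ i * t) - 1) / (1 - t ^ 2) := by
    intro i _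
    have ha : 1 - ε ^ i * t ≠ 0 := one_sub_ne_zero_of_pow
      (by rw [pow_right_comm, hε.pow_eq_one, one_pow]) ht
    have hb : 1 - ε⁻¹ ^ i * t ≠ 0 := one_sub_ne_zero_of_pow
      (by rw [pow_right_comm, hε.inv.pow_eq_one, one_pow]) ht
    have hab : ε ^ i * ε⁻¹ ^ i = 1 := by rw [← mul_pow, mul_inv_cancel₀ hε0, one_pow]
    rw [zpow_neg, zpow_natCast, ← inv_pow]
    generalize ε ^ i = a at *
    generalize ε⁻¹ ^ i = b at *
    rw [div_add_div _ _ ha hb, div_sub_one (mul_ne_zero ha hb), div_div,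
      div_eq_div_iff (mul_ne_zero ha hb) (mul_ne_zero (mul_ne_zero ha hb) h2)]
    linear_combination (1 - a * t) * (1 - b * t) * t ^ 2 * hab
  rw [Finset.sum_congr rfl key, ← Finset.sum_div, Finset.sum_sub_distrib,
    Finset.sum_add_distrib, sum_one_div_one_sub hN hε ht, sum_one_div_one_sub hN hε.inv ht]
  have h4 : t ^ (4 * n) = (t ^ (2 * n)) ^ 2 := by rw [← pow_mul]; congr 1; ring
  rw [h4]
  simp only [Finset.sum_const, Finset.card_range, nsmul_eq_mul, mul_one]
  push_cast
  generalize t ^ (2 * n) = u at *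
  field_simp
  ring
end

section
/- Let k be an algebraically closed field of characteristic zero and H a finite subgroup of GL₂(k) such that every element of H has determinant 1 or −1, some element of H has determinant −1, and G := H ∩ SL₂(k) is cyclic. Then there exist P ∈ GL₂(k) and a positive integer n such that P·H·P⁻¹ is one of the following groups: (1) the two-element group {I, d₁}; (2) the group generated by d₁ and c_ε with ε a primitive 2n-th root of unity; (3) the group generated by d₁ and c_ε with ε a primitive n-th root of unity and n odd; (4) the cyclic group generated by c_{ε,−} with ε a primitive 4n-th root of unity; (5) the group generated by s and c_ε with ε a primitive n-th root of unity. -/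
/-!
Write `c ε = diag(ε, ε⁻¹)`. Two facts drive the classification: an element of finite order in
`GL₂(k)` is diagonalizable (`exists_conj_diagonal`), and the determinant `-1` elements of `H` form a
single coset of `G = H ∩ SL₂(k)`, so `H` is generated by any one of them together with a generator
of `G` (`CyclicSLPart.eq_closure`).

After a conjugation, `G` is generated by `c ε` with `ε` a primitive `N`-th root of unity. Take `h` in
`H` of determinant `-1`. If `ε² = 1`, then `c ε` is scalar and a further conjugation makes `h`
diagonal. If `ε² ≠ 1`, then `h` normalizes `G`, hence permutes the two eigenlines of `c ε`, and so is
diagonal or antidiagonal (`CyclicSLPart.diagonal_or_antidiagonal`). An antidiagonal `h` is carried to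
`s` by a diagonal conjugation, which fixes `c ε`: this is the dihedral-type family.

If `h = diag(a, -a⁻¹)`, then `h² ∈ G` gives `a² = ε ^ j`. When `j` can be chosen even (always
possible for `N` odd), dividing `h` by a power of `c ε` gives `diag(1, -1)` or `diag(-1, 1)`, and
the two are exchanged by conjugation with `s`. Otherwise `N` is even and dividing by a power of `c ε`
leaves `diag(b, -b⁻¹)` with `b² = ε`; its square is `c ε`, so it generates `H`, and `-b` is a
primitive `2N`-th root of unity. The trivial group `G` is covered by the family with `N` odd.
-/

open Matrix

/-- `H` is conjugate to one of the five listed groups. -/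
def IsListed {k : Type*} [Field k] (H : Subgroup (GL (Fin 2) k)) : Prop :=
    ∃ P : GL (Fin 2) k, ∃ n : ℕ, 0 < n ∧
      ((∃ d₁ : GL (Fin 2) k, (d₁ : Matrix (Fin 2) (Fin 2) k) = !![-1, 0; 0, 1] ∧
          Subgroup.map (MulAut.conj P).toMonoidHom H = Subgroup.closure {d₁}) ∨
       (∃ ε : k, IsPrimitiveRoot ε (2 * n) ∧
          ∃ d₁ cε : GL (Fin 2) k, (d₁ : Matrix (Fin 2) (Fin 2) k) = !![-1, 0; 0, 1] ∧
            (cε : Matrix (Fin 2) (Fin 2) k) = !![ε, 0; 0, ε⁻¹] ∧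
            Subgroup.map (MulAut.conj P).toMonoidHom H = Subgroup.closure {d₁, cε}) ∨
       (Odd n ∧ ∃ ε : k, IsPrimitiveRoot ε n ∧
          ∃ d₁ cε : GL (Fin 2) k, (d₁ : Matrix (Fin 2) (Fin 2) k) = !![-1, 0; 0, 1] ∧
            (cε : Matrix (Fin 2) (Fin 2) k) = !![ε, 0; 0, ε⁻¹] ∧
            Subgroup.map (MulAut.conj P).toMonoidHom H = Subgroup.closure {d₁, cε}) ∨
       (∃ ε : k, IsPrimitiveRoot ε (4 * n) ∧
          ∃ cm : GL (Fin 2) k, (cm : Matrix (Fin 2) (Fin 2) k) = !![-ε, 0; 0, ε⁻¹] ∧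
            Subgroup.map (MulAut.conj P).toMonoidHom H = Subgroup.closure {cm}) ∨
       (∃ ε : k, IsPrimitiveRoot ε n ∧
          ∃ s cε : GL (Fin 2) k, (s : Matrix (Fin 2) (Fin 2) k) = !![0, 1; 1, 0] ∧
            (cε : Matrix (Fin 2) (Fin 2) k) = !![ε, 0; 0, ε⁻¹] ∧
            Subgroup.map (MulAut.conj P).toMonoidHom H = Subgroup.closure {s, cε}))

/-- `H` has determinants `±1`, and its determinant `1` part is generated by the finite-order element
`c = diag(ε, ε⁻¹)`. -/
structure CyclicSLPart {k : Type*} [Field k] (H : Subgroup (GL (Fin 2) k)) (c : GL (Fin 2) k)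
    (ε : k) : Prop where
  det : ∀ g ∈ H, (g : Matrix (Fin 2) (Fin 2) k).det = 1 ∨ (g : Matrix (Fin 2) (Fin 2) k).det = -1
  mem : c ∈ H
  coe : (c : Matrix (Fin 2) (Fin 2) k) = !![ε, 0; 0, ε⁻¹]
  ne_zero : ε ≠ 0
  gen : ∀ g ∈ H, (g : Matrix (Fin 2) (Fin 2) k).det = 1 → g ∈ Subgroup.zpowers c
  fin : IsOfFinOrder c

section

variable {k : Type*} [Field k]

/-- The element of `GL₂(k)` with the given matrix of nonzero determinant. -/
noncomputable def mkGL (M : Matrix (Fin 2) (Fin 2) k) (h : M.det ≠ 0) : GL (Fin 2) k :=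
  Matrix.GeneralLinearGroup.mkOfDetNeZero M h

@[simp] lemma coe_mkGL (M : Matrix (Fin 2) (Fin 2) k) (h : M.det ≠ 0) :
    ((mkGL M h : GL (Fin 2) k) : Matrix (Fin 2) (Fin 2) k) = M := rfl

lemma map_conj_one (H : Subgroup (GL (Fin 2) k)) :
    Subgroup.map (MulAut.conj (1 : GL (Fin 2) k)).toMonoidHom H = H := by
  ext x
  simp

lemma map_conj_mul (P Q : GL (Fin 2) k) (H : Subgroup (GL (Fin 2) k)) :
    Subgroup.map (MulAut.conj P).toMonoidHom (Subgroup.map (MulAut.conj Q).toMonoidHom H) =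
      Subgroup.map (MulAut.conj (P * Q)).toMonoidHom H := by
  rw [Subgroup.map_map]
  congr 1
  ext x : 1
  simp [mul_assoc]

lemma IsListed.of_conj {H : Subgroup (GL (Fin 2) k)} (Q : GL (Fin 2) k)
    (h : IsListed (Subgroup.map (MulAut.conj Q).toMonoidHom H)) : IsListed H := by
  obtain ⟨P, n, hn, h⟩ := h
  simp only [map_conj_mul] at h
  exact ⟨P * Q, n, hn, h⟩

lemma det_conj_GL (P g : GL (Fin 2) k) :
    ((P * g * P⁻¹ : GL (Fin 2) k) : Matrix (Fin 2) (Fin 2) k).det =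
      (g : Matrix (Fin 2) (Fin 2) k).det := by
  have h : Matrix.GeneralLinearGroup.det (P * g * P⁻¹) = Matrix.GeneralLinearGroup.det g := by
    simp
  simpa only [Matrix.GeneralLinearGroup.val_det_apply] using congrArg Units.val h

/-- Conjugation preserves `CyclicSLPart`, provided the generator remains diagonal. -/
lemma CyclicSLPart.conj {H : Subgroup (GL (Fin 2) k)} {c : GL (Fin 2) k} {ε δ : k}
    (hc : CyclicSLPart H c ε) (P : GL (Fin 2) k) (hδ : δ ≠ 0)
    (hP : ((P * c * P⁻¹ : GL (Fin 2) k) : Matrix (Fin 2) (Fin 2) k) = !![δ, 0; 0, δ⁻¹]) :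
    CyclicSLPart (Subgroup.map (MulAut.conj P).toMonoidHom H) (P * c * P⁻¹) δ where
  det := by
    rintro _ ⟨g, hg, rfl⟩
    simpa only [MulEquiv.coe_toMonoidHom, MulAut.conj_apply, det_conj_GL] using hc.det g hg
  mem := ⟨c, hc.mem, rfl⟩
  coe := hP
  ne_zero := hδ
  gen := by
    rintro _ ⟨g, hg, rfl⟩ h
    simp only [MulEquiv.coe_toMonoidHom, MulAut.conj_apply, det_conj_GL] at h ⊢
    obtain ⟨m, rfl⟩ := hc.gen g hg h
    exact ⟨m, by simp⟩
  fin := (MulAut.conj P).toMonoidHom.isOfFinOrder hc.fin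

lemma coe_zpow_diagonal {c : GL (Fin 2) k} {ε : k} (hε : ε ≠ 0)
    (hc : (c : Matrix (Fin 2) (Fin 2) k) = !![ε, 0; 0, ε⁻¹]) (m : ℤ) :
    ((c ^ m : GL (Fin 2) k) : Matrix (Fin 2) (Fin 2) k) = !![ε ^ m, 0; 0, (ε ^ m)⁻¹] := by
  have key : ∀ n : ℕ, ((c ^ n : GL (Fin 2) k) : Matrix (Fin 2) (Fin 2) k) =
      !![ε ^ n, 0; 0, (ε ^ n)⁻¹] := by
    intro n
    induction n with
    | zero => ext i j; fin_cases i <;> fin_cases j <;> simp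
    | succ n ih =>
      rw [pow_succ, Units.val_mul, ih, hc]
      ext i j
      fin_cases i <;> fin_cases j <;> simp [pow_succ, mul_comm]
  obtain ⟨n, rfl | rfl⟩ := m.eq_nat_or_neg
  · simpa using key n
  · have hn : ε ^ n ≠ 0 := pow_ne_zero n hε
    -- the inverse is pinned down by its product with `c ^ n`
    have h1 : c ^ n * mkGL !![(ε ^ n)⁻¹, 0; 0, ε ^ n] (by simp [Matrix.det_fin_two, hn]) = 1 := by
      apply Units.ext
      rw [Units.val_mul, key n, coe_mkGL]
      ext i j
      fin_cases i <;> fin_cases j <;> simp [hn]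
    rw [_root_.zpow_neg, zpow_natCast, inv_eq_of_mul_eq_one_right h1]
    simp

lemma CyclicSLPart.isPrimitiveRoot {H : Subgroup (GL (Fin 2) k)} {c : GL (Fin 2) k} {ε : k}
    (hc : CyclicSLPart H c ε) : IsPrimitiveRoot ε (orderOf c) := by
  have key : ∀ n : ℕ, c ^ n = 1 ↔ ε ^ n = 1 := by
    intro n
    have h := coe_zpow_diagonal hc.ne_zero hc.coe n
    simp only [zpow_natCast] at h
    constructor
    · intro h1
      rw [h1] at h
      simpa using (congrFun (congrFun h 0) 0).symm
    · intro h1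
      apply Units.ext
      rw [h, h1]
      ext i j
      fin_cases i <;> fin_cases j <;> simp
  have : orderOf c = orderOf ε := orderOf_eq_orderOf_iff.2 key
  rw [this]
  exact IsPrimitiveRoot.orderOf ε

/-- The determinant `-1` elements of `H` form one coset of its determinant `1` part. -/
lemma CyclicSLPart.eq_closure {H : Subgroup (GL (Fin 2) k)} {c x : GL (Fin 2) k} {ε : k}
    (hc : CyclicSLPart H c ε) (hx : x ∈ H) (hdx : (x : Matrix (Fin 2) (Fin 2) k).det = -1) :
    H = Subgroup.closure {x, c} := by
  apply le_antisymm
  · have hx' : x ∈ Subgroup.closure {x, c} := Subgroup.subset_closure (by simp)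
    have hc' : Subgroup.zpowers c ≤ Subgroup.closure {x, c} := by
      rw [Subgroup.zpowers_le]
      exact Subgroup.subset_closure (by simp)
    intro g hg
    rcases hc.det g hg with h | h
    · exact hc' (hc.gen g hg h)
    · have h1 := hc.gen (x * g) (mul_mem hx hg) (by rw [Units.val_mul, Matrix.det_mul, hdx, h]; ring)
      exact (Subgroup.mul_mem_cancel_left _ hx').1 (hc' h1)
  · rw [Subgroup.closure_le]
    rintro y (rfl | rfl)
    exacts [hx, hc.mem]

/-- If `H` contains `diag(-1, 1)`, it is in the second or third family according to the parity of
the order of `ε`. -/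
lemma CyclicSLPart.isListed_of_reflection {H : Subgroup (GL (Fin 2) k)} {c x : GL (Fin 2) k} {ε : k}
    (hc : CyclicSLPart H c ε) (hx : x ∈ H)
    (hxm : (x : Matrix (Fin 2) (Fin 2) k) = !![-1, 0; 0, 1]) : IsListed H := by
  have hH := hc.eq_closure hx (by rw [hxm]; simp [Matrix.det_fin_two])
  have hN := hc.fin.orderOf_pos
  have hε := hc.isPrimitiveRoot
  rcases Nat.even_or_odd' (orderOf c) with ⟨n, h | h⟩
  · refine ⟨1, n, by omega, Or.inr (Or.inl ⟨ε, h ▸ hε, x, c, hxm, hc.coe, ?_⟩)⟩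
    rw [map_conj_one, ← hH]
  · refine ⟨1, orderOf c, hN, Or.inr (Or.inr (Or.inl ⟨⟨n, h⟩, ε, hε, x, c, hxm, hc.coe, ?_⟩))⟩
    rw [map_conj_one, ← hH]

/-- The reflection `diag(1, -1)` is conjugate to `diag(-1, 1)` by the swap of coordinates, which
replaces `ε` by `ε⁻¹`. -/
lemma CyclicSLPart.isListed_of_reflection' {H : Subgroup (GL (Fin 2) k)} {c x : GL (Fin 2) k}
    {ε : k} (hc : CyclicSLPart H c ε) (hx : x ∈ H)
    (hxm : (x : Matrix (Fin 2) (Fin 2) k) = !![1, 0; 0, -1]) : IsListed H := by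
  let S : GL (Fin 2) k := mkGL !![0, 1; 1, 0] (by simp [Matrix.det_fin_two])
  have hS : S⁻¹ = S := by
    apply inv_eq_of_mul_eq_one_right
    apply Units.ext
    ext i j
    fin_cases i <;> fin_cases j <;> simp [S]
  have hSc : ((S * c * S⁻¹ : GL (Fin 2) k) : Matrix (Fin 2) (Fin 2) k) =
      !![ε⁻¹, 0; 0, ε⁻¹⁻¹] := by
    rw [hS, Units.val_mul, Units.val_mul, hc.coe]
    ext i j
    fin_cases i <;> fin_cases j <;> simp [S]
  refine IsListed.of_conj S ((hc.conj S (inv_ne_zero hc.ne_zero) hSc).isListed_of_reflection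
    ⟨x, hx, rfl⟩ ?_)
  change ((S * x * S⁻¹ : GL (Fin 2) k) : Matrix (Fin 2) (Fin 2) k) = _
  rw [hS, Units.val_mul, Units.val_mul, hxm]
  ext i j
  fin_cases i <;> fin_cases j <;> simp [S]

lemma isPrimitiveRoot_of_sq {a ε : k} {n : ℕ} (ha : a ^ 2 = ε) (hn : 0 < n)
    (hε : IsPrimitiveRoot ε (2 * n)) : IsPrimitiveRoot a (4 * n) := by
  have h := hε.eq_orderOf
  have hfin : IsOfFinOrder a := isOfFinOrder_iff_pow_eq_one.2
    ⟨2 * (2 * n), by omega, by rw [pow_mul, ha, hε.pow_eq_one]⟩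
  rw [← ha, orderOf_pow' a two_ne_zero] at h
  have h4 : orderOf a = 4 * n := by
    rcases Nat.even_or_odd' (orderOf a) with ⟨m, hm | hm⟩
    · rw [hm, Nat.gcd_mul_right_left] at h
      omega
    · rw [hm] at h
      have : Nat.gcd (2 * m + 1) 2 = 1 := by simp
      rw [this] at h
      omega
  rw [← h4]
  exact IsPrimitiveRoot.orderOf a

/-- If `H` contains a diagonal element of determinant `-1`, the parity of the exponent `j` in
`a² = ε ^ j` separates the groups containing a reflection from the cyclic ones. -/
lemma CyclicSLPart.isListed_of_diagonal {H : Subgroup (GL (Fin 2) k)} {c h : GL (Fin 2) k}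
    {ε a d : k} (hc : CyclicSLPart H c ε) (hh : h ∈ H)
    (hdet : (h : Matrix (Fin 2) (Fin 2) k).det = -1)
    (hm : (h : Matrix (Fin 2) (Fin 2) k) = !![a, 0; 0, d]) : IsListed H := by
  have had : a * d = -1 := by simpa [hm, Matrix.det_fin_two] using hdet
  have ha : a ≠ 0 := by rintro rfl; simp at had
  have hd : d = -a⁻¹ := by field_simp; linear_combination had
  subst hd
  have hε0 := hc.ne_zero
  have hε := hc.isPrimitiveRoot
  obtain ⟨j, hj⟩ := hc.gen (h * h) (mul_mem hh hh)
    (by rw [Units.val_mul, Matrix.det_mul, hdet]; ring)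
  have haj : a ^ 2 = ε ^ j := by
    have h1 := congrArg (fun g : GL (Fin 2) k => (g : Matrix (Fin 2) (Fin 2) k) 0 0) hj
    simp only [coe_zpow_diagonal hc.ne_zero hc.coe, Units.val_mul, hm] at h1
    simp at h1
    rw [h1, sq]
  -- the elements `diag(b, -b⁻¹)` of the coset of `h`
  have hx : ∀ i : ℤ, ∃ x ∈ H, (x : Matrix (Fin 2) (Fin 2) k) =
      !![a * ε ^ i, 0; 0, -(a * ε ^ i)⁻¹] := by
    intro i
    refine ⟨h * c ^ i, mul_mem hh (zpow_mem hc.mem i), ?_⟩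
    rw [Units.val_mul, hm, coe_zpow_diagonal hc.ne_zero hc.coe]
    ext i j
    fin_cases i <;> fin_cases j <;> simp [mul_comm]
  have heven : ∀ i : ℤ, a ^ 2 = ε ^ (2 * i) → IsListed H := by
    intro i hi
    obtain ⟨x, hxH, hxm⟩ := hx (-i)
    have hb : (a * ε ^ (-i)) ^ 2 = 1 := by
      rw [mul_pow, hi, ← zpow_natCast (ε ^ (-i)), ← _root_.zpow_mul, ← zpow_add₀ hε0]
      have : 2 * i + -i * ((2 : ℕ) : ℤ) = 0 := by push_cast; ring
      rw [this, zpow_zero]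
    rcases (by simpa using hb : a * ε ^ (-i) = 1 ∨ a * ε ^ (-i) = -1) with h1 | h1
    · exact hc.isListed_of_reflection' hxH (by rw [hxm, h1]; simp)
    · exact hc.isListed_of_reflection hxH (by rw [hxm, h1]; simp)
  rcases Int.even_or_odd' j with ⟨i, rfl | rfl⟩
  · exact heven i haj
  rcases Nat.even_or_odd' (orderOf c) with ⟨n, hN | hN⟩
  · obtain ⟨x, hxH, hxm⟩ := hx (-i)
    have hn : 0 < n := by have := hc.fin.orderOf_pos; omega
    set b := a * ε ^ (-i) with hb_def
    have hb0 : b ≠ 0 := mul_ne_zero ha (zpow_ne_zero _ hε0)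
    have hb : b ^ 2 = ε := by
      rw [hb_def, mul_pow, haj, ← zpow_natCast (ε ^ (-i)), ← _root_.zpow_mul, ← zpow_add₀ hε0]
      have : 2 * i + 1 + -i * ((2 : ℕ) : ℤ) = 1 := by push_cast; ring
      rw [this, zpow_one]
    have hxc : x ^ 2 = c := by
      apply Units.ext
      rw [sq, Units.val_mul, hxm, hc.coe, ← hb]
      ext i j
      fin_cases i <;> fin_cases j <;> simp [sq]
    have hH := hc.eq_closure hxH (by rw [hxm]; simp [Matrix.det_fin_two, hb0])
    refine ⟨1, n, hn, Or.inr (Or.inr (Or.inr (Or.inl ⟨-b, isPrimitiveRoot_of_sq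
      (by rw [neg_sq, hb]) hn (hN ▸ hε), x, by rw [hxm, neg_neg, inv_neg], ?_⟩)))⟩
    rw [map_conj_one]
    apply le_antisymm
    · rw [hH, Subgroup.closure_le]
      have hx' : x ∈ Subgroup.closure {x} := Subgroup.subset_closure rfl
      rintro y (rfl | rfl)
      · exact hx'
      · rw [← hxc]
        exact pow_mem hx' 2
    · rw [Subgroup.closure_le]
      rintro y rfl
      exact hxH
  · -- adding the odd order `2n + 1` of `ε` to an odd exponent makes it even
    refine heven (i + n + 1) ?_
    have h1 : ε ^ ((2 * n + 1 : ℕ) : ℤ) = 1 := by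
      rw [zpow_natCast, ← hN]
      exact hε.pow_eq_one
    have h2 : 2 * (i + n + 1) = (2 * i + 1) + ((2 * n + 1 : ℕ) : ℤ) := by push_cast; ring
    rw [h2, zpow_add₀ hε0, h1, mul_one, haj]

/-- An antidiagonal element of determinant `-1` is carried to `s` by a diagonal conjugation. -/
lemma CyclicSLPart.isListed_of_antidiagonal {H : Subgroup (GL (Fin 2) k)} {c h : GL (Fin 2) k}
    {ε q r : k} (hc : CyclicSLPart H c ε) (hh : h ∈ H)
    (hdet : (h : Matrix (Fin 2) (Fin 2) k).det = -1)
    (hm : (h : Matrix (Fin 2) (Fin 2) k) = !![0, q; r, 0]) : IsListed H := by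
  have hqr : q * r = 1 := by simpa [hm, Matrix.det_fin_two] using hdet
  let D : GL (Fin 2) k := mkGL !![r, 0; 0, 1]
    (by simpa [Matrix.det_fin_two] using right_ne_zero_of_mul_eq_one hqr)
  have hDh : ((D * h * D⁻¹ : GL (Fin 2) k) : Matrix (Fin 2) (Fin 2) k) = !![0, 1; 1, 0] := by
    have : D * h = mkGL !![0, 1; 1, 0] (by simp [Matrix.det_fin_two]) * D := by
      apply Units.ext
      rw [Units.val_mul, Units.val_mul, hm]
      ext i j
      fin_cases i <;> fin_cases j <;> simp [D, mul_comm r q, hqr]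
    rw [this, mul_inv_cancel_right]
    rfl
  have hDc : D * c * D⁻¹ = c := by
    rw [mul_inv_eq_iff_eq_mul]
    apply Units.ext
    rw [Units.val_mul, Units.val_mul, hc.coe]
    ext i j
    fin_cases i <;> fin_cases j <;> simp [D, mul_comm]
  refine ⟨D, orderOf c, hc.fin.orderOf_pos, Or.inr (Or.inr (Or.inr (Or.inr
    ⟨ε, hc.isPrimitiveRoot, D * h * D⁻¹, c, hDh, hc.coe, ?_⟩)))⟩
  conv_lhs => rw [hc.eq_closure hh hdet]
  rw [MonoidHom.map_closure, Set.image_pair]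
  simp [hDc]

/-- When `c` has distinct eigenvalues, the elements of `H` permute its eigenlines. -/
lemma CyclicSLPart.diagonal_or_antidiagonal {H : Subgroup (GL (Fin 2) k)} {c h : GL (Fin 2) k}
    {ε : k} (hc : CyclicSLPart H c ε) (hε : ε ^ 2 ≠ 1) (hh : h ∈ H) :
    (∃ a d, (h : Matrix (Fin 2) (Fin 2) k) = !![a, 0; 0, d]) ∨
      ∃ q r, (h : Matrix (Fin 2) (Fin 2) k) = !![0, q; r, 0] := by
  have hε0 := hc.ne_zero
  obtain ⟨m, hm⟩ := hc.gen (h * c * h⁻¹) (mul_mem (mul_mem hh hc.mem) (inv_mem hh))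
    (by rw [det_conj_GL, hc.coe]; simp [Matrix.det_fin_two, hε0])
  have hδ0 : ε ^ m ≠ 0 := zpow_ne_zero m hε0
  have hcomm := congrArg (fun g : GL (Fin 2) k => (g : Matrix (Fin 2) (Fin 2) k))
    (mul_inv_eq_iff_eq_mul.1 hm.symm)
  have hdet : (h : Matrix (Fin 2) (Fin 2) k).det ≠ 0 :=
    (Matrix.isUnit_iff_isUnit_det _).1 h.isUnit |>.ne_zero
  simp only [Units.val_mul, coe_zpow_diagonal hε0 hc.coe, hc.coe] at hcomm
  generalize ε ^ m = δ at hcomm hδ0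
  rw [Matrix.eta_fin_two (h : Matrix (Fin 2) (Fin 2) k)] at hcomm hdet ⊢
  generalize (h : Matrix (Fin 2) (Fin 2) k) 0 0 = p at *
  generalize (h : Matrix (Fin 2) (Fin 2) k) 0 1 = q at *
  generalize (h : Matrix (Fin 2) (Fin 2) k) 1 0 = r at *
  generalize (h : Matrix (Fin 2) (Fin 2) k) 1 1 = t at *
  have e00 := congrFun (congrFun hcomm 0) 0
  have e01 := congrFun (congrFun hcomm 0) 1
  have e10 := congrFun (congrFun hcomm 1) 0
  have e11 := congrFun (congrFun hcomm 1) 1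
  simp at e00 e01 e10 e11
  rw [Matrix.det_fin_two_of] at hdet
  field_simp at e01 e10 e11
  have hne : ε ^ 2 - 1 ≠ 0 := sub_ne_zero.2 hε
  by_cases hp : p = 0
  · subst hp
    have hq : q ≠ 0 := by rintro rfl; simp at hdet
    have hεδ : ε * δ = 1 := mul_left_cancel₀ hq (by linear_combination -e01)
    have ht : t = 0 := by
      refine (mul_eq_zero.1 (?_ : (ε ^ 2 - 1) * t = 0)).resolve_left hne
      linear_combination t * hεδ - ε * e11
    exact Or.inr ⟨q, r, by rw [ht]⟩
  · have hεδ : ε = δ := mul_left_cancel₀ hp (by linear_combination e00)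
    subst hεδ
    refine Or.inl ⟨p, t, ?_⟩
    have hq : q = 0 := by
      refine (mul_eq_zero.1 (?_ : (ε ^ 2 - 1) * q = 0)).resolve_left hne
      linear_combination -e01
    have hr : r = 0 := by
      refine (mul_eq_zero.1 (?_ : (ε ^ 2 - 1) * r = 0)).resolve_left hne
      linear_combination e10
    rw [hq, hr]

/-- A finite-order element is diagonalizable: it is triangularizable since `k` is algebraically
closed, and a triangular matrix with a repeated eigenvalue has infinite order in characteristic zero
unless it is scalar. -/
lemma exists_conj_diagonal [IsAlgClosed k] [CharZero k] (g : GL (Fin 2) k) (hg : IsOfFinOrder g) :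
    ∃ (P : GL (Fin 2) k) (a d : k),
      ((P * g * P⁻¹ : GL (Fin 2) k) : Matrix (Fin 2) (Fin 2) k) = !![a, 0; 0, d] := by
  -- a conjugate of `g` is upper triangular
  obtain ⟨Q, a, b, d, hQ⟩ : ∃ (Q : GL (Fin 2) k) (a b d : k),
      ((Q⁻¹ * g * Q : GL (Fin 2) k) : Matrix (Fin 2) (Fin 2) k) = !![a, b; 0, d] := by
    obtain ⟨a, ha⟩ := Module.End.exists_eigenvalue
      (Matrix.toLin' (g : Matrix (Fin 2) (Fin 2) k))
    obtain ⟨v, hv⟩ := ha.exists_hasEigenvector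
    have hgv : (g : Matrix (Fin 2) (Fin 2) k) *ᵥ v = a • v := by
      simpa using hv.apply_eq_smul
    obtain ⟨Q, hQv⟩ : ∃ Q : GL (Fin 2) k, (Q : Matrix (Fin 2) (Fin 2) k) *ᵥ ![1, 0] = v := by
      by_cases h0 : v 0 = 0
      · have h1 : v 1 ≠ 0 := fun h1 => hv.2 (by ext i; fin_cases i <;> simp [h0, h1])
        refine ⟨mkGL !![0, 1; v 1, 0] (by simpa [Matrix.det_fin_two] using h1), ?_⟩
        ext i
        fin_cases i <;> simp [h0, Matrix.mulVec, dotProduct]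
      · refine ⟨mkGL !![v 0, 0; v 1, 1] (by simpa [Matrix.det_fin_two] using h0), ?_⟩
        ext i
        fin_cases i <;> simp [Matrix.mulVec, dotProduct]
    have hT : ((Q⁻¹ * g * Q : GL (Fin 2) k) : Matrix (Fin 2) (Fin 2) k) *ᵥ ![1, 0] =
        a • ![1, 0] := by
      rw [Units.val_mul, Units.val_mul, ← Matrix.mulVec_mulVec, ← Matrix.mulVec_mulVec, hQv, hgv,
        Matrix.mulVec_smul, ← hQv, Matrix.mulVec_mulVec, ← Units.val_mul, inv_mul_cancel,
        Units.val_one, Matrix.one_mulVec]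
    refine ⟨Q, a, ((Q⁻¹ * g * Q : GL (Fin 2) k) : Matrix (Fin 2) (Fin 2) k) 0 1,
      ((Q⁻¹ * g * Q : GL (Fin 2) k) : Matrix (Fin 2) (Fin 2) k) 1 1, ?_⟩
    generalize ((Q⁻¹ * g * Q : GL (Fin 2) k) : Matrix (Fin 2) (Fin 2) k) = T at hT ⊢
    have t0 := congrFun hT 0
    have t1 := congrFun hT 1
    simp [Matrix.mulVec, dotProduct] at t0 t1
    ext i j
    fin_cases i <;> fin_cases j <;> simp [t0, t1]
  by_cases had : a = d
  · subst had
    obtain ⟨n, hn, hgn⟩ := isOfFinOrder_iff_pow_eq_one.1 hg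
    have hTn : (Q⁻¹ * g * Q) ^ n = 1 := by
      have := conj_pow (i := n) (a := Q⁻¹) (b := g)
      rw [inv_inv] at this
      rw [this, hgn]
      simp
    have hpow : ∀ m : ℕ, (!![a, b; 0, a] : Matrix (Fin 2) (Fin 2) k) ^ (m + 1) =
        !![a ^ (m + 1), (m + 1) * a ^ m * b; 0, a ^ (m + 1)] := by
      intro m
      induction m with
      | zero => simp
      | succ m ih =>
        rw [pow_succ, ih]
        ext i j
        fin_cases i <;> fin_cases j <;> simp [pow_succ] <;> ring
    have hone := congrArg (fun g : GL (Fin 2) k => (g : Matrix (Fin 2) (Fin 2) k)) hTn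
    obtain ⟨m, rfl⟩ : ∃ m, n = m + 1 := ⟨n - 1, by omega⟩
    simp only [Units.val_pow_eq_pow_val, hQ, hpow, Units.val_one] at hone
    have h00 := congrFun (congrFun hone 0) 0
    have h01 := congrFun (congrFun hone 0) 1
    simp at h00 h01
    have ha : a ≠ 0 := by rintro rfl; simp at h00
    have hb : b = 0 := by
      rcases h01 with (h | h) | h
      · exact absurd h (Nat.cast_add_one_ne_zero m)
      · exact absurd h.1 ha
      · exact h
    refine ⟨Q⁻¹, a, a, ?_⟩
    rw [inv_inv, hQ, hb]
  · -- the columns of `R` are eigenvectors of the triangular matrix for `a` and `d`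
    let R : GL (Fin 2) k := mkGL !![1, b; 0, d - a]
      (by simpa [Matrix.det_fin_two, sub_eq_zero] using Ne.symm had)
    by_cases hu : a * d = 0
    · have : ((Q⁻¹ * g * Q : GL (Fin 2) k) : Matrix (Fin 2) (Fin 2) k).det ≠ 0 :=
        (Matrix.isUnit_iff_isUnit_det _).1 (Units.isUnit _) |>.ne_zero
      rw [hQ, Matrix.det_fin_two_of] at this
      simp [hu] at this
    refine ⟨R⁻¹ * Q⁻¹, a, d, ?_⟩
    have hR : (Q⁻¹ * g * Q) * R =
        R * mkGL !![a, 0; 0, d] (by simpa [Matrix.det_fin_two] using hu) := by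
      apply Units.ext
      rw [Units.val_mul, hQ, Units.val_mul]
      ext i j
      fin_cases i <;> fin_cases j <;> simp [R] <;> ring
    have : R⁻¹ * Q⁻¹ * g * (R⁻¹ * Q⁻¹)⁻¹ = mkGL !![a, 0; 0, d]
        (by simpa [Matrix.det_fin_two] using hu) := by
      rw [← mul_right_inj R, ← hR]
      group
    rw [this]
    rfl

/-- The classification once the generator of the determinant `1` part is diagonal. -/
lemma CyclicSLPart.isListed [IsAlgClosed k] [CharZero k] {H : Subgroup (GL (Fin 2) k)}
    {c h : GL (Fin 2) k} {ε : k} (hc : CyclicSLPart H c ε) (hh : h ∈ H) (hfin : IsOfFinOrder h)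
    (hdet : (h : Matrix (Fin 2) (Fin 2) k).det = -1) : IsListed H := by
  by_cases hε : ε ^ 2 = 1
  · obtain ⟨P, a, d, hP⟩ := exists_conj_diagonal h hfin
    have hinv : ε⁻¹ = ε := inv_eq_of_mul_eq_one_right (by rw [← sq, hε])
    -- `c` is scalar, hence unaffected by the conjugation
    have hPc : P * c * P⁻¹ = c := by
      rw [mul_inv_eq_iff_eq_mul]
      apply Units.ext
      rw [Units.val_mul, Units.val_mul, hc.coe, hinv]
      ext i j
      fin_cases i <;> fin_cases j <;> simp [Matrix.mul_apply, mul_comm]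
    exact IsListed.of_conj P ((hc.conj P hc.ne_zero (by rw [hPc, hc.coe])).isListed_of_diagonal
      ⟨h, hh, rfl⟩ (by simpa only [MulEquiv.coe_toMonoidHom, MulAut.conj_apply, det_conj_GL] using
        hdet) hP)
  · rcases hc.diagonal_or_antidiagonal hε hh with ⟨a, d, hm⟩ | ⟨q, r, hm⟩
    · exact hc.isListed_of_diagonal hh hdet hm
    · exact hc.isListed_of_antidiagonal hh hdet hm

end

/-- Lemma 3.2: if `H ≤ GL₂(k)` is finite with all determinants `±1`, some
determinant `-1`, and `G = H ∩ SL₂(k)` cyclic, then up to conjugation `H` is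
one of the five listed groups. -/
theorem finite_subgroups_with_cyclic_SL_part
    {k : Type*} [Field k] [IsAlgClosed k] [CharZero k]
    (H : Subgroup (GL (Fin 2) k)) [Finite H]
    (hdet : ∀ g ∈ H, ((g : GL (Fin 2) k) : Matrix (Fin 2) (Fin 2) k).det = 1 ∨
        ((g : GL (Fin 2) k) : Matrix (Fin 2) (Fin 2) k).det = -1)
    (hneg : ∃ g ∈ H, ((g : GL (Fin 2) k) : Matrix (Fin 2) (Fin 2) k).det = -1)
    (hcyc : IsCyclic
      ↥(H ⊓ (Matrix.GeneralLinearGroup.det : GL (Fin 2) k →* kˣ).ker)) :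
    ∃ P : GL (Fin 2) k, ∃ n : ℕ, 0 < n ∧
      ((∃ d₁ : GL (Fin 2) k, (d₁ : Matrix (Fin 2) (Fin 2) k) = !![-1, 0; 0, 1] ∧
          Subgroup.map (MulAut.conj P).toMonoidHom H = Subgroup.closure {d₁}) ∨
       (∃ ε : k, IsPrimitiveRoot ε (2 * n) ∧
          ∃ d₁ cε : GL (Fin 2) k, (d₁ : Matrix (Fin 2) (Fin 2) k) = !![-1, 0; 0, 1] ∧
            (cε : Matrix (Fin 2) (Fin 2) k) = !![ε, 0; 0, ε⁻¹] ∧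
            Subgroup.map (MulAut.conj P).toMonoidHom H = Subgroup.closure {d₁, cε}) ∨
       (Odd n ∧ ∃ ε : k, IsPrimitiveRoot ε n ∧
          ∃ d₁ cε : GL (Fin 2) k, (d₁ : Matrix (Fin 2) (Fin 2) k) = !![-1, 0; 0, 1] ∧
            (cε : Matrix (Fin 2) (Fin 2) k) = !![ε, 0; 0, ε⁻¹] ∧
            Subgroup.map (MulAut.conj P).toMonoidHom H = Subgroup.closure {d₁, cε}) ∨
       (∃ ε : k, IsPrimitiveRoot ε (4 * n) ∧
          ∃ cm : GL (Fin 2) k, (cm : Matrix (Fin 2) (Fin 2) k) = !![-ε, 0; 0, ε⁻¹] ∧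
            Subgroup.map (MulAut.conj P).toMonoidHom H = Subgroup.closure {cm}) ∨
       (∃ ε : k, IsPrimitiveRoot ε n ∧
          ∃ s cε : GL (Fin 2) k, (s : Matrix (Fin 2) (Fin 2) k) = !![0, 1; 1, 0] ∧
            (cε : Matrix (Fin 2) (Fin 2) k) = !![ε, 0; 0, ε⁻¹] ∧
            Subgroup.map (MulAut.conj P).toMonoidHom H = Subgroup.closure {s, cε})) := by
  obtain ⟨c, hcgen⟩ := hcyc.exists_generator
  obtain ⟨h, hh, hhdet⟩ := hneg
  have hfin : ∀ g ∈ H, IsOfFinOrder g := fun g hg =>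
    H.subtype.isOfFinOrder (isOfFinOrder_of_finite (⟨g, hg⟩ : H))
  obtain ⟨P, a, d, hP⟩ := exists_conj_diagonal (c : GL (Fin 2) k) (hfin _ c.2.1)
  have hcdet : ((c : GL (Fin 2) k) : Matrix (Fin 2) (Fin 2) k).det = 1 := by
    have := congrArg Units.val (MonoidHom.mem_ker.1 c.2.2)
    simpa only [Matrix.GeneralLinearGroup.val_det_apply, Units.val_one] using this
  have had : a * d = 1 := by
    have := det_conj_GL P (c : GL (Fin 2) k)
    rw [hP, hcdet] at this
    simpa [Matrix.det_fin_two] using this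
  have ha : a ≠ 0 := left_ne_zero_of_mul_eq_one had
  have hd : d = a⁻¹ := (inv_eq_of_mul_eq_one_right had).symm
  subst hd
  have key : CyclicSLPart (Subgroup.map (MulAut.conj P).toMonoidHom H)
      (P * (c : GL (Fin 2) k) * P⁻¹) a := by
    refine ⟨?_, ⟨c, c.2.1, rfl⟩, hP, ha, ?_, (MulAut.conj P).toMonoidHom.isOfFinOrder
      (hfin _ c.2.1)⟩
    · rintro _ ⟨g, hg, rfl⟩
      simpa only [MulEquiv.coe_toMonoidHom, MulAut.conj_apply, det_conj_GL] using hdet g hg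
    · rintro _ ⟨g, hg, rfl⟩ h1
      simp only [MulEquiv.coe_toMonoidHom, MulAut.conj_apply, det_conj_GL] at h1 ⊢
      have hgk : g ∈ (Matrix.GeneralLinearGroup.det : GL (Fin 2) k →* kˣ).ker := by
        rw [MonoidHom.mem_ker]
        exact Units.ext h1
      obtain ⟨m, hm⟩ := hcgen ⟨g, hg, hgk⟩
      have hm' : (c : GL (Fin 2) k) ^ m = g := by simpa using congrArg Subtype.val hm
      exact ⟨m, by simp [← hm']⟩
  exact IsListed.of_conj P (key.isListed (h := P * h * P⁻¹) ⟨h, hh, rfl⟩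
    ((MulAut.conj P).toMonoidHom.isOfFinOrder (hfin h hh)) (by rw [det_conj_GL, hhdet]))
end

section
/- Let k be an algebraically closed field of characteristic zero, let O ≤ GL₂(k) be the subgroup of invertible diagonal matrices, and let U ≤ GL₂(k) be the subgroup of matrices that are either diagonal or antidiagonal. Let H be a finite subgroup of U that is not contained in O, such that either H ⊆ SL₂(k), or every element of H has determinant 1 or −1 with some element of determinant −1. Then there exist P ∈ GL₂(k) and a positive integer n such that P·H·P⁻¹ is one of: (1) the binary dihedral group generated by s₁ and c_ε with ε a primitive 2n-th root of unity; (2) the dihedral group generated by s and c_ε with ε a primitive n-th root of unity; (3) the group of order 8n generated by d₁, s, and c_ε with ε a primitive 2n-th root of unity; (4) the group of order 8n generated by s and c_{ε,−} with ε a primitive 4n-th root of unity. -/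
/-! Write `dg a b` and `ad a b` for the diagonal and antidiagonal matrices with entries `a`, `b`.
A group `H` as in the theorem contains an antidiagonal element `ad a b`, and conjugating by the
diagonal matrix `dg a⁻¹ 1` turns it into `ad 1 (a * b)` while fixing every diagonal matrix. Hence

* if some antidiagonal element has `a * b = 1` (determinant `-1`), the conjugate contains `s`;
* otherwise every antidiagonal element has determinant `1`, hence so does every diagonal one
  (multiply it by an antidiagonal one), and the conjugate contains `s₁`.

One antidiagonal element together with the diagonal part generates the group (`eq_closure`), so it
remains to determine the diagonal part. Those of its elements that have determinant `1` are the
`dg a a⁻¹` with `a` in a finite subgroup `K` of `kˣ`, which is cyclic, generated by some `ζ`.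

* If all diagonal elements have determinant `1`, `H` is generated by `dg ζ ζ⁻¹` and `s` or `s₁`; in
  the case of `s₁`, the relation `s₁ ^ 2 = -1` forces `K` to have even order (`normal_binary`,
  `normal_dihedral`).
* Otherwise let `dg x y` in `H` have determinant `x * y = -1`. Then `(dg x y * s) ^ 2 = -1`, so `K`
  has even order `2 * n` and `H` has order `8 * n` (`card_eq`), and `x ^ 2 = ζ ^ i` for some `i`.
  If `i` is even, then `x ∈ K` and `H` contains `d₁`. If `i = 2 * j + 1`, then `ε = x * ζ ^ (-j)`
  is a square root of `ζ`, hence a primitive `4 * n`-th root of unity, and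
  `dg (-ε) ε⁻¹` lies in `H` and has square `dg ζ ζ⁻¹` (`normal_mixed`). -/

open Matrix

namespace FiniteSubgroupsOfU

variable {k : Type*} [Field k]

/-! ### Diagonal and antidiagonal matrices -/

/-- The diagonal matrix with diagonal entries `a`, `b`. -/
def dg (a b : kˣ) : GL (Fin 2) k where
  val := !![(a : k), 0; 0, (b : k)]
  inv := !![((a⁻¹ : kˣ) : k), 0; 0, ((b⁻¹ : kˣ) : k)]
  val_inv := by simp [Matrix.one_fin_two]
  inv_val := by simp [Matrix.one_fin_two]

/-- The antidiagonal matrix with upper right entry `a` and lower left entry `b`. -/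
def ad (a b : kˣ) : GL (Fin 2) k where
  val := !![0, (a : k); (b : k), 0]
  inv := !![0, ((b⁻¹ : kˣ) : k); ((a⁻¹ : kˣ) : k), 0]
  val_inv := by simp [Matrix.one_fin_two]
  inv_val := by simp [Matrix.one_fin_two]

lemma coe_dg (a b : kˣ) : (dg a b : Matrix (Fin 2) (Fin 2) k) = !![(a : k), 0; 0, (b : k)] := rfl

lemma coe_ad (a b : kˣ) : (ad a b : Matrix (Fin 2) (Fin 2) k) = !![0, (a : k); (b : k), 0] := rfl

lemma dg_mul_dg (a b c d : kˣ) : dg a b * dg c d = dg (a * c) (b * d) :=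
  Units.ext (by simp [coe_dg])

lemma dg_mul_ad (a b c d : kˣ) : dg a b * ad c d = ad (a * c) (b * d) :=
  Units.ext (by simp [coe_dg, coe_ad])

lemma ad_mul_dg (a b c d : kˣ) : ad a b * dg c d = ad (a * d) (b * c) :=
  Units.ext (by simp [coe_dg, coe_ad])

lemma ad_mul_ad (a b c d : kˣ) : ad a b * ad c d = dg (a * d) (b * c) :=
  Units.ext (by simp [coe_dg, coe_ad])

lemma dg_one : dg (1 : kˣ) 1 = 1 := Units.ext (by simp [coe_dg, Matrix.one_fin_two])

lemma dg_inv (a b : kˣ) : (dg a b)⁻¹ = dg a⁻¹ b⁻¹ :=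
  inv_eq_of_mul_eq_one_right (by simp [dg_mul_dg, dg_one])

lemma ad_inv (a b : kˣ) : (ad a b)⁻¹ = ad b⁻¹ a⁻¹ :=
  inv_eq_of_mul_eq_one_right (by simp [ad_mul_ad, dg_one])

lemma dg_inj {a b c d : kˣ} (h : dg a b = dg c d) : a = c ∧ b = d := by
  have h0 := congrArg (fun g : GL (Fin 2) k => (g : Matrix (Fin 2) (Fin 2) k) 0 0) h
  have h1 := congrArg (fun g : GL (Fin 2) k => (g : Matrix (Fin 2) (Fin 2) k) 1 1) h
  simp [coe_dg] at h0 h1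
  exact ⟨Units.ext h0, Units.ext h1⟩

lemma dg_ne_ad (a b c d : kˣ) : dg a b ≠ ad c d := by
  intro h
  have h0 := congrArg (fun g : GL (Fin 2) k => (g : Matrix (Fin 2) (Fin 2) k) 0 0) h
  simp [coe_dg, coe_ad] at h0

/-- The homomorphism `a ↦ dg a a⁻¹`, whose image is the group of diagonal matrices of
determinant `1`. -/
def sd : kˣ →* GL (Fin 2) k where
  toFun a := dg a a⁻¹
  map_one' := by simp [dg_one]
  map_mul' a b := by simp [dg_mul_dg, mul_comm]

lemma sd_apply (a : kˣ) : sd a = dg a a⁻¹ := rfl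

lemma sd_injective : Function.Injective (sd : kˣ →* GL (Fin 2) k) :=
  fun _ _ h => (dg_inj h).1

/-- The homomorphism `(a, b) ↦ dg a b`, whose image is the group of diagonal matrices. -/
def dgHom : kˣ × kˣ →* GL (Fin 2) k where
  toFun p := dg p.1 p.2
  map_one' := dg_one
  map_mul' _ _ := (dg_mul_dg _ _ _ _).symm

lemma eq_sd {a b : kˣ} (h : a * b = 1) : dg a b = sd a := by
  rw [sd_apply, eq_inv_of_mul_eq_one_right h]

/-- `g` is diagonal or antidiagonal. -/
def IsMonomial (g : GL (Fin 2) k) : Prop := (∃ a b, g = dg a b) ∨ ∃ a b, g = ad a b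

lemma exists_dg {g : GL (Fin 2) k} (h : (g : Matrix (Fin 2) (Fin 2) k) 0 1 = 0 ∧
    (g : Matrix (Fin 2) (Fin 2) k) 1 0 = 0) : ∃ a b, g = dg a b := by
  have hd : (g : Matrix (Fin 2) (Fin 2) k).det ≠ 0 := (Matrix.isUnits_det_units g).ne_zero
  rw [Matrix.det_fin_two, h.1, zero_mul, sub_zero] at hd
  refine ⟨Units.mk0 _ (left_ne_zero_of_mul hd), Units.mk0 _ (right_ne_zero_of_mul hd), ?_⟩
  ext i j
  fin_cases i <;> fin_cases j <;> simp [coe_dg, h.1, h.2]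

lemma exists_ad {g : GL (Fin 2) k} (h : (g : Matrix (Fin 2) (Fin 2) k) 0 0 = 0 ∧
    (g : Matrix (Fin 2) (Fin 2) k) 1 1 = 0) : ∃ a b, g = ad a b := by
  have hd : (g : Matrix (Fin 2) (Fin 2) k).det ≠ 0 := (Matrix.isUnits_det_units g).ne_zero
  rw [Matrix.det_fin_two, h.1, zero_mul, zero_sub, neg_ne_zero] at hd
  refine ⟨Units.mk0 _ (left_ne_zero_of_mul hd), Units.mk0 _ (right_ne_zero_of_mul hd), ?_⟩
  ext i j
  fin_cases i <;> fin_cases j <;> simp [coe_ad, h.1, h.2]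

lemma isMonomial_conj {g : GL (Fin 2) k} (h : IsMonomial g) (p q : kˣ) :
    IsMonomial (dg p q * g * (dg p q)⁻¹) := by
  rw [dg_inv]
  rcases h with ⟨a, b, rfl⟩ | ⟨a, b, rfl⟩
  · exact Or.inl ⟨_, _, by rw [dg_mul_dg, dg_mul_dg]⟩
  · exact Or.inr ⟨_, _, by rw [dg_mul_ad, ad_mul_dg]⟩

lemma dg_conj (p q a b : kˣ) : dg p q * dg a b * (dg p q)⁻¹ = dg a b := by
  rw [dg_inv, dg_mul_dg, dg_mul_dg, mul_right_comm, mul_inv_cancel, one_mul, mul_right_comm,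
    mul_inv_cancel, one_mul]

/-! ### Generators of monomial groups -/

/-- A group of diagonal and antidiagonal matrices is generated by any of its subsets that contains
an antidiagonal element and generates the diagonal part. -/
lemma eq_closure {H : Subgroup (GL (Fin 2) k)} {S : Set (GL (Fin 2) k)}
    (hU : ∀ g ∈ H, IsMonomial g) (hS : S ⊆ H) {p q : kˣ} (ht : ad p q ∈ S)
    (hD : ∀ a b, dg a b ∈ H → dg a b ∈ Subgroup.closure S) : H = Subgroup.closure S := by
  refine le_antisymm (fun g hg => ?_) ((Subgroup.closure_le H).2 hS)
  rcases hU g hg with ⟨a, b, rfl⟩ | ⟨a, b, rfl⟩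
  · exact hD a b hg
  · have h1 := mul_mem hg (hS ht)
    rw [ad_mul_ad] at h1
    have h2 := mul_mem (hD _ _ h1) (inv_mem (Subgroup.subset_closure ht))
    rwa [← ad_mul_ad, mul_inv_cancel_right] at h2

/-- The group `{a | dg a a⁻¹ ∈ H}` embeds into `H` by `sd`, so it is a finite subgroup of `kˣ` and
hence cyclic. -/
lemma exists_generator (H : Subgroup (GL (Fin 2) k)) [Finite H] :
    ∃ ζ : kˣ, IsPrimitiveRoot (ζ : k) (orderOf ζ) ∧ 0 < orderOf ζ ∧
      Nat.card (H.comap sd) = orderOf ζ ∧ ∀ a, sd a ∈ H ↔ ∃ i : ℤ, ζ ^ i = a := by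
  have : Finite (H.comap sd) :=
    Finite.of_injective (fun x : H.comap sd => (⟨sd x.1, x.2⟩ : H))
      fun x y h => Subtype.ext (sd_injective (congrArg Subtype.val h))
  obtain ⟨ζ, hζ⟩ := (Subgroup.isCyclic_iff_exists_zpowers_eq_top (H.comap sd)).1 inferInstance
  have hc : Nat.card (H.comap sd) = orderOf ζ := by rw [← hζ, Nat.card_zpowers]
  refine ⟨ζ, ?_, hc ▸ Nat.card_pos, hc, fun a => ?_⟩
  · exact IsPrimitiveRoot.coe_units_iff.2 (IsPrimitiveRoot.orderOf ζ)
  · rw [← Subgroup.mem_comap, ← hζ, Subgroup.mem_zpowers_iff]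

lemma sd_zpow_mem {S : Subgroup (GL (Fin 2) k)} {ζ : kˣ} (h : sd ζ ∈ S) (i : ℤ) :
    sd (ζ ^ i) ∈ S := by
  rw [map_zpow]
  exact zpow_mem h i

/-- A finite cyclic subgroup of `kˣ` that contains `-1` has even order, since `-1` has order `2`. -/
lemma exists_two_mul [CharZero k] {ζ : kˣ} (h0 : 0 < orderOf ζ) (h : ∃ i : ℤ, ζ ^ i = -1) :
    ∃ n, 0 < n ∧ orderOf ζ = 2 * n := by
  have h2 : orderOf (-1 : kˣ) = 2 := by
    rw [← orderOf_units, Units.val_neg, Units.val_one, orderOf_neg_one, ringChar.eq_zero]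
    simp
  obtain ⟨n, hn⟩ := h2 ▸ orderOf_dvd_of_mem_zpowers (Subgroup.mem_zpowers_iff.2 h)
  exact ⟨n, by omega, hn⟩

/-! ### Groups whose diagonal part has determinant one -/

/-- The case in which all elements have determinant `1`. -/
lemma normal_binary [CharZero k] (H : Subgroup (GL (Fin 2) k)) [Finite H]
    (hU : ∀ g ∈ H, IsMonomial g) (hD : ∀ a b, dg a b ∈ H → a * b = 1) (hs : ad 1 (-1) ∈ H) :
    ∃ n, 0 < n ∧ ∃ ζ : kˣ, IsPrimitiveRoot (ζ : k) (2 * n) ∧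
      H = Subgroup.closure {ad 1 (-1), dg ζ ζ⁻¹} := by
  obtain ⟨ζ, hp, h0, -, hK⟩ := exists_generator H
  have hm : sd (-1) ∈ H := by
    have := mul_mem hs hs
    rwa [ad_mul_ad, one_mul, mul_one, eq_sd (by simp)] at this
  obtain ⟨n, hn, hn2⟩ := exists_two_mul h0 ((hK _).1 hm)
  refine ⟨n, hn, ζ, hn2 ▸ hp, eq_closure hU ?_ (Set.mem_insert _ _) fun a b h => ?_⟩
  · rintro g (rfl | rfl)
    exacts [hs, (hK ζ).2 ⟨1, zpow_one ζ⟩]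
  · have hab := eq_sd (hD a b h)
    rw [hab] at h ⊢
    obtain ⟨i, rfl⟩ := (hK a).1 h
    exact sd_zpow_mem (Subgroup.subset_closure (by simp [sd_apply])) i

/-- The case in which exactly the antidiagonal elements have determinant `-1`. -/
lemma normal_dihedral (H : Subgroup (GL (Fin 2) k)) [Finite H]
    (hU : ∀ g ∈ H, IsMonomial g) (hD : ∀ a b, dg a b ∈ H → a * b = 1) (hs : ad 1 1 ∈ H) :
    ∃ n, 0 < n ∧ ∃ ζ : kˣ, IsPrimitiveRoot (ζ : k) n ∧
      H = Subgroup.closure {ad 1 1, dg ζ ζ⁻¹} := by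
  obtain ⟨ζ, hp, h0, -, hK⟩ := exists_generator H
  refine ⟨_, h0, ζ, hp, eq_closure hU ?_ (Set.mem_insert _ _) fun a b h => ?_⟩
  · rintro g (rfl | rfl)
    exacts [hs, (hK ζ).2 ⟨1, zpow_one ζ⟩]
  · have hab := eq_sd (hD a b h)
    rw [hab] at h ⊢
    obtain ⟨i, rfl⟩ := (hK a).1 h
    exact sd_zpow_mem (Subgroup.subset_closure (by simp [sd_apply])) i

/-! ### Groups whose diagonal part has both determinants -/

lemma card_eq_two_mul {G : Type*} [Group G] {A B : Subgroup G} (hAB : A ≤ B) {t : G} (ht : t ∈ B)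
    (htA : t ∉ A) (h : ∀ b ∈ B, b ∈ A ∨ b * t ∈ A) : Nat.card B = 2 * Nat.card A := by
  have hi : (A.subgroupOf B).index = 2 := by
    rw [Subgroup.index_eq_two_iff]
    refine ⟨⟨t, ht⟩, fun b => ?_⟩
    simp only [Subgroup.mem_subgroupOf, Subgroup.coe_mul]
    rcases h b b.2 with hb | hb
    · exact Or.inr ⟨hb, fun hbt => htA ((mul_mem_cancel_left hb).1 hbt)⟩
    · exact Or.inl ⟨hb, fun hb' => htA ((mul_mem_cancel_left hb').1 hb)⟩
  rw [← Subgroup.card_mul_index (A.subgroupOf B), hi, mul_comm,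
    Nat.card_congr (Subgroup.subgroupOfEquivOfLe hAB).toEquiv]

/-- In the presence of diagonal elements of determinant `-1`, the diagonal matrices of determinant
`1` have index `4` in the group. -/
lemma card_eq [CharZero k] {H : Subgroup (GL (Fin 2) k)} (hU : ∀ g ∈ H, IsMonomial g)
    (hD : ∀ a b, dg a b ∈ H → a * b = 1 ∨ a * b = -1) (hs : ad 1 1 ∈ H) {x y : kˣ}
    (hxy : x * y = -1) (hx : dg x y ∈ H) : Nat.card H = 4 * Nat.card (H.comap sd) := by
  have e1 : Nat.card H = 2 * Nat.card (H ⊓ dgHom.range : Subgroup (GL (Fin 2) k)) := by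
    refine card_eq_two_mul inf_le_left hs ?_ fun b hb => ?_
    · rintro ⟨-, ⟨⟨a, b⟩, h⟩⟩
      exact dg_ne_ad _ _ _ _ h
    · rcases hU b hb with ⟨c, d, rfl⟩ | ⟨c, d, rfl⟩
      · exact Or.inl ⟨hb, (c, d), rfl⟩
      · exact Or.inr ⟨mul_mem hb hs, (c * 1, d * 1), (ad_mul_ad _ _ _ _).symm⟩
  have e2 : Nat.card (H ⊓ dgHom.range : Subgroup (GL (Fin 2) k)) =
      2 * Nat.card ((H.comap sd).map sd) := by
    refine card_eq_two_mul (t := dg x y) ?_ ⟨hx, (x, y), rfl⟩ ?_ ?_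
    · rintro _ ⟨a, ha, rfl⟩
      exact ⟨ha, (a, a⁻¹), rfl⟩
    · rintro ⟨a, -, h⟩
      obtain ⟨rfl, rfl⟩ := dg_inj h
      rw [mul_inv_cancel] at hxy
      have := congrArg Units.val hxy
      norm_num at this
    · rintro _ ⟨hb, ⟨⟨c, d⟩, rfl⟩⟩
      have hb' : dg c d ∈ H := hb
      rcases hD c d hb' with h | h
      · exact Or.inl ⟨c, by rwa [eq_sd h] at hb', (eq_sd h).symm⟩
      · right
        have h1 : (c * x) * (d * y) = 1 := by
          rw [mul_mul_mul_comm, h, hxy, neg_mul_neg, one_mul]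
        have h2 := mul_mem hb' hx
        have h3 : dgHom (c, d) * dg x y = dg (c * x) (d * y) := dg_mul_dg _ _ _ _
        rw [h3]
        rw [dg_mul_dg, eq_sd h1] at h2
        exact ⟨_, h2, (eq_sd h1).symm⟩
  rw [e1, e2, Subgroup.card_map_of_injective sd_injective]
  ring

lemma orderOf_of_sq {ε ζ : kˣ} {n : ℕ} (h : ε ^ 2 = ζ) (hζ : orderOf ζ = 2 * n) :
    orderOf ε = 4 * n := by
  have h1 : orderOf ζ = orderOf ε / Nat.gcd (orderOf ε) 2 := h ▸ orderOf_pow' ε two_ne_zero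
  rcases (Nat.dvd_prime Nat.prime_two).1 (Nat.gcd_dvd_right (orderOf ε) 2) with h2 | h2
  · rw [h2, Nat.div_one] at h1
    rw [← h1, hζ, Nat.gcd_mul_right_left] at h2
    omega
  · obtain ⟨c, hc⟩ := h2 ▸ Nat.gcd_dvd_left (orderOf ε) 2
    rw [h2] at h1
    omega

/-- The case in which both diagonal and antidiagonal elements take both determinants. -/
lemma normal_mixed [CharZero k] (H : Subgroup (GL (Fin 2) k)) [Finite H]
    (hU : ∀ g ∈ H, IsMonomial g) (hD : ∀ a b, dg a b ∈ H → a * b = 1 ∨ a * b = -1)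
    (hs : ad 1 1 ∈ H) {x y : kˣ} (hxy : x * y = -1) (hx : dg x y ∈ H) :
    ∃ n, 0 < n ∧ Nat.card H = 8 * n ∧
      ((∃ ζ : kˣ, IsPrimitiveRoot (ζ : k) (2 * n) ∧
        H = Subgroup.closure {dg (-1) 1, ad 1 1, dg ζ ζ⁻¹}) ∨
      (∃ ε : kˣ, IsPrimitiveRoot (ε : k) (4 * n) ∧
        H = Subgroup.closure {ad 1 1, dg (-ε) ε⁻¹})) := by
  obtain ⟨ζ, hp, h0, hc, hK⟩ := exists_generator H
  have hζ : sd ζ ∈ H := (hK ζ).2 ⟨1, zpow_one ζ⟩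
  have hm : sd (-1) ∈ H := by
    have h1 := mul_mem hx hs
    have h2 := mul_mem h1 h1
    rwa [dg_mul_ad, ad_mul_ad, mul_one, mul_one, mul_comm y, hxy, eq_sd (by simp)] at h2
  obtain ⟨n, hn, hn2⟩ := exists_two_mul h0 ((hK _).1 hm)
  have hy : y = -x⁻¹ := by
    rw [eq_inv_mul_of_mul_eq hxy, mul_neg, mul_one]
  -- A diagonal element of determinant `-1` in a subgroup that contains `sd ζ` reduces the
  -- diagonal part to determinant `1`.
  have key : ∀ {S : Set (GL (Fin 2) k)} {p q : kˣ}, p * q = -1 → dg p q ∈ H →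
      dg p q ∈ Subgroup.closure S → sd ζ ∈ Subgroup.closure S →
      ∀ a b, dg a b ∈ H → dg a b ∈ Subgroup.closure S := by
    intro S p q hpq hH hS hζS a b hab
    rcases hD a b hab with h | h
    · rw [eq_sd h] at hab ⊢
      obtain ⟨i, rfl⟩ := (hK a).1 hab
      exact sd_zpow_mem hζS i
    · have h1 : (p * a) * (q * b) = 1 := by
        rw [mul_mul_mul_comm, h, hpq, neg_mul_neg, one_mul]
      have h2 := mul_mem hH hab
      rw [dg_mul_dg, eq_sd h1] at h2
      obtain ⟨i, hi⟩ := (hK _).1 h2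
      rw [← mul_mem_cancel_left hS, dg_mul_dg, eq_sd h1, ← hi]
      exact sd_zpow_mem hζS i
  have hsq : sd (x ^ 2) ∈ H := by
    have h1 := mul_mem hx hx
    rwa [dg_mul_dg, eq_sd (by rw [mul_mul_mul_comm, hxy, neg_mul_neg, one_mul]), ← sq] at h1
  refine ⟨n, hn, by rw [card_eq hU hD hs hxy hx, hc, hn2]; ring, ?_⟩
  obtain ⟨i, hi⟩ := (hK _).1 hsq
  rcases Int.even_or_odd' i with ⟨j, rfl | rfl⟩
  · left
    have hxK : sd x ∈ H := by
      have h1 : (ζ ^ j) ^ 2 = x ^ 2 := by rw [← hi, ← zpow_natCast, ← _root_.zpow_mul, mul_comm]; rfl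
      rcases sq_eq_sq_iff_eq_or_eq_neg.1 (congrArg Units.val h1) with h | h
      · rw [← Units.ext h]
        exact sd_zpow_mem hζ j
      · have h2 : x = -1 * ζ ^ j := by
          ext
          have h' : ((ζ ^ j : kˣ) : k) = -(x : k) := h
          rw [Units.val_mul, h']
          simp
        rw [h2, map_mul]
        exact mul_mem hm (sd_zpow_mem hζ j)
    have hd : dg (-1) 1 ∈ H := by
      have h1 := mul_mem hx (inv_mem (mul_mem hm hxK))
      rwa [← map_mul, ← map_inv, sd_apply, dg_mul_dg, hy,
        show x * (-1 * x)⁻¹ = -1 by simp, show -x⁻¹ * (-1 * x)⁻¹⁻¹ = 1 by simp] at h1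
    refine ⟨ζ, hn2 ▸ hp, eq_closure hU ?_ (p := 1) (q := 1) (by simp) (key (by simp) hd
      (Subgroup.subset_closure (by simp)) (Subgroup.subset_closure (by simp [sd_apply])))⟩
    rintro g (rfl | rfl | rfl)
    exacts [hd, hs, hζ]
  · right
    have hε : (x * ζ ^ (-j)) ^ 2 = ζ := by
      rw [mul_pow, ← hi, ← zpow_natCast, ← _root_.zpow_mul, ← _root_.zpow_add]
      convert zpow_one ζ using 2
      push_cast
      ring
    generalize hεd : x * ζ ^ (-j) = ε at hε
    have hmem : dg (-ε) ε⁻¹ ∈ H := by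
      have h1 := mul_mem hx (mul_mem hm (sd_zpow_mem hζ (-j)))
      rwa [← map_mul, sd_apply, dg_mul_dg, hy, show x * (-1 * ζ ^ (-j)) = -ε by simp [← hεd],
        show -x⁻¹ * (-1 * ζ ^ (-j))⁻¹ = ε⁻¹ by simp [← hεd, mul_comm]] at h1
    have hgen : dg (-ε) ε⁻¹ ∈ Subgroup.closure {ad 1 1, dg (-ε) ε⁻¹} :=
      Subgroup.subset_closure (by simp)
    refine ⟨ε, ?_, eq_closure hU ?_ (Set.mem_insert _ _) (key (by simp) hmem hgen ?_)⟩
    · rw [← orderOf_of_sq hε hn2]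
      exact IsPrimitiveRoot.coe_units_iff.2 (IsPrimitiveRoot.orderOf ε)
    · rintro g (rfl | rfl)
      exacts [hs, hmem]
    · have h1 := mul_mem hgen hgen
      rwa [dg_mul_dg, neg_mul_neg, ← mul_inv, ← sq, hε] at h1

end FiniteSubgroupsOfU

/-! ### The classification -/

open FiniteSubgroupsOfU

/-- Lemma 3.5: a finite subgroup `H` of `U ≤ GL₂(k)` (diagonal or antidiagonal
matrices), not contained in the diagonal subgroup `O`, that is either
contained in `SL₂(k)` or has all determinants `±1` with some determinant `-1`,
is up to conjugation one of the groups `Q₅, Q₆, Q₇, Q₈`. -/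
theorem finite_subgroups_of_U
    {k : Type*} [Field k] [IsAlgClosed k] [CharZero k]
    (H : Subgroup (GL (Fin 2) k)) [Finite H]
    (hU : ∀ g ∈ H, (((g : GL (Fin 2) k) : Matrix (Fin 2) (Fin 2) k) 0 1 = 0 ∧
          ((g : GL (Fin 2) k) : Matrix (Fin 2) (Fin 2) k) 1 0 = 0) ∨
        (((g : GL (Fin 2) k) : Matrix (Fin 2) (Fin 2) k) 0 0 = 0 ∧
          ((g : GL (Fin 2) k) : Matrix (Fin 2) (Fin 2) k) 1 1 = 0))
    (hnotO : ∃ g ∈ H, ¬ (((g : GL (Fin 2) k) : Matrix (Fin 2) (Fin 2) k) 0 1 = 0 ∧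
        ((g : GL (Fin 2) k) : Matrix (Fin 2) (Fin 2) k) 1 0 = 0))
    (hdet : (∀ g ∈ H, ((g : GL (Fin 2) k) : Matrix (Fin 2) (Fin 2) k).det = 1) ∨
      ((∀ g ∈ H, ((g : GL (Fin 2) k) : Matrix (Fin 2) (Fin 2) k).det = 1 ∨
          ((g : GL (Fin 2) k) : Matrix (Fin 2) (Fin 2) k).det = -1) ∧
        ∃ g ∈ H, ((g : GL (Fin 2) k) : Matrix (Fin 2) (Fin 2) k).det = -1)) :
    ∃ P : GL (Fin 2) k, ∃ n : ℕ, 0 < n ∧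
      ((∃ ε : k, IsPrimitiveRoot ε (2 * n) ∧
          ∃ s₁ cε : GL (Fin 2) k, (s₁ : Matrix (Fin 2) (Fin 2) k) = !![0, 1; -1, 0] ∧
            (cε : Matrix (Fin 2) (Fin 2) k) = !![ε, 0; 0, ε⁻¹] ∧
            Subgroup.map (MulAut.conj P).toMonoidHom H = Subgroup.closure {s₁, cε}) ∨
       (∃ ε : k, IsPrimitiveRoot ε n ∧
          ∃ s cε : GL (Fin 2) k, (s : Matrix (Fin 2) (Fin 2) k) = !![0, 1; 1, 0] ∧
            (cε : Matrix (Fin 2) (Fin 2) k) = !![ε, 0; 0, ε⁻¹] ∧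
            Subgroup.map (MulAut.conj P).toMonoidHom H = Subgroup.closure {s, cε}) ∨
       (∃ ε : k, IsPrimitiveRoot ε (2 * n) ∧
          ∃ d₁ s cε : GL (Fin 2) k, (d₁ : Matrix (Fin 2) (Fin 2) k) = !![-1, 0; 0, 1] ∧
            (s : Matrix (Fin 2) (Fin 2) k) = !![0, 1; 1, 0] ∧
            (cε : Matrix (Fin 2) (Fin 2) k) = !![ε, 0; 0, ε⁻¹] ∧
            Subgroup.map (MulAut.conj P).toMonoidHom H = Subgroup.closure {d₁, s, cε} ∧
            Nat.card ↥(Subgroup.closure {d₁, s, cε} : Subgroup (GL (Fin 2) k)) = 8 * n) ∨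
       (∃ ε : k, IsPrimitiveRoot ε (4 * n) ∧
          ∃ s cm : GL (Fin 2) k, (s : Matrix (Fin 2) (Fin 2) k) = !![0, 1; 1, 0] ∧
            (cm : Matrix (Fin 2) (Fin 2) k) = !![-ε, 0; 0, ε⁻¹] ∧
            Subgroup.map (MulAut.conj P).toMonoidHom H = Subgroup.closure {s, cm} ∧
            Nat.card ↥(Subgroup.closure {s, cm} : Subgroup (GL (Fin 2) k)) = 8 * n)) := by
  have hM : ∀ g ∈ H, IsMonomial g := fun g hg => (hU g hg).imp exists_dg exists_ad
  have hdet' : ∀ g ∈ H, ((g : GL (Fin 2) k) : Matrix (Fin 2) (Fin 2) k).det = 1 ∨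
      ((g : GL (Fin 2) k) : Matrix (Fin 2) (Fin 2) k).det = -1 := by
    rcases hdet with h | h
    exacts [fun g hg => Or.inl (h g hg), h.1]
  have hD : ∀ a b, dg a b ∈ H → a * b = 1 ∨ a * b = -1 := fun a b h => by
    simpa [coe_dg, Matrix.det_fin_two, Units.ext_iff] using hdet' _ h
  have hA : ∀ a b, ad a b ∈ H → a * b = 1 ∨ a * b = -1 := fun a b h => by
    have := hdet' _ h
    simp only [coe_ad, Matrix.det_fin_two_of, zero_mul, zero_sub, neg_inj] at this
    rw [neg_eq_iff_eq_neg] at this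
    simpa [Units.ext_iff] using this.symm
  have hex : ∃ a b, ad a b ∈ H := by
    obtain ⟨g, hg, hgO⟩ := hnotO
    rcases hU g hg with h | h
    · exact absurd h hgO
    · obtain ⟨a, b, rfl⟩ := exists_ad h
      exact ⟨a, b, hg⟩
  -- Conjugation by `dg a⁻¹ 1` normalises `ad a b` and does not change the diagonal part.
  have conj : ∀ a b : kˣ, ad a b ∈ H → ∃ H' : Subgroup (GL (Fin 2) k),
      H' = Subgroup.map (MulAut.conj (dg a⁻¹ 1)).toMonoidHom H ∧ Finite H' ∧
      (∀ g ∈ H', IsMonomial g) ∧ (∀ x y, dg x y ∈ H' → dg x y ∈ H) ∧ ad 1 (a * b) ∈ H' := by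
    intro a b hab
    refine ⟨_, rfl, Set.Finite.image _ (Set.toFinite (H : Set (GL (Fin 2) k))), ?_, ?_, ad a b, hab, ?_⟩
    · rintro _ ⟨g, hg, rfl⟩
      exact isMonomial_conj (hM g hg) _ _
    · rintro x y ⟨g, hg, h⟩
      have h' : dg a⁻¹ 1 * g * (dg a⁻¹ 1)⁻¹ = dg x y := h
      rw [← dg_conj a⁻¹ 1 x y] at h'
      rwa [← mul_left_cancel (mul_right_cancel h')]
    · change dg a⁻¹ 1 * ad a b * (dg a⁻¹ 1)⁻¹ = _
      rw [dg_inv, dg_mul_ad, ad_mul_dg]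
      simp [mul_comm]
  by_cases hneg : ∃ a b, ad a b ∈ H ∧ a * b = 1
  · obtain ⟨a, b, hab, hab1⟩ := hneg
    obtain ⟨H', hH', hfin, hU', hDH, hs⟩ := conj a b hab
    rw [hab1] at hs
    refine ⟨dg a⁻¹ 1, ?_⟩
    rw [← hH']
    by_cases hx : ∃ x y, dg x y ∈ H' ∧ x * y = -1
    · obtain ⟨x, y, hx, hxy⟩ := hx
      obtain ⟨n, hn, hcard, ⟨ζ, hζ, h⟩ | ⟨ε, hε, h⟩⟩ :=
        normal_mixed H' hU' (fun x y h => hD x y (hDH x y h)) hs hxy hx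
      · refine ⟨n, hn, Or.inr (Or.inr (Or.inl ⟨ζ, hζ, dg (-1) 1, ad 1 1, dg ζ ζ⁻¹, ?_, ?_, ?_, h,
          h ▸ hcard⟩))⟩
        all_goals simp [coe_dg, coe_ad]
      · refine ⟨n, hn, Or.inr (Or.inr (Or.inr ⟨ε, hε, ad 1 1, dg (-ε) ε⁻¹, ?_, ?_, h,
          h ▸ hcard⟩))⟩
        all_goals simp [coe_dg, coe_ad]
    · obtain ⟨n, hn, ζ, hζ, h⟩ := normal_dihedral H' hU' (fun x y h =>
        (hD x y (hDH x y h)).resolve_right fun h' => hx ⟨x, y, h, h'⟩) hs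
      refine ⟨n, hn, Or.inr (Or.inl ⟨ζ, hζ, ad 1 1, dg ζ ζ⁻¹, ?_, ?_, h⟩)⟩
      all_goals simp [coe_dg, coe_ad]
  · obtain ⟨a, b, hab⟩ := hex
    have hA' : ∀ a b, ad a b ∈ H → a * b = -1 := fun a b h =>
      (hA a b h).resolve_left fun h' => hneg ⟨a, b, h, h'⟩
    have hD' : ∀ x y, dg x y ∈ H → x * y = 1 := fun x y h => by
      have h1 := mul_mem h hab
      rw [dg_mul_ad] at h1
      have h2 := hA' _ _ h1
      rwa [mul_mul_mul_comm, hA' _ _ hab, mul_neg, mul_one, neg_inj] at h2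
    obtain ⟨H', hH', hfin, hU', hDH, hs⟩ := conj a b hab
    rw [hA' _ _ hab] at hs
    refine ⟨dg a⁻¹ 1, ?_⟩
    rw [← hH']
    obtain ⟨n, hn, ζ, hζ, h⟩ := normal_binary H' hU' (fun x y h => hD' x y (hDH x y h)) hs
    refine ⟨n, hn, Or.inl ⟨ζ, hζ, ad 1 (-1), dg ζ ζ⁻¹, ?_, ?_, h⟩⟩
    all_goals simp [coe_dg, coe_ad]
end
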